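/- There exists an absolute constant c ≥ 1 (independent of the dimension and of the bodies) such that for every dimension d ≥ 2, every pair of convex bodies G, K ⊆ ℝ^d with 0 ∈ int(G) and G ⊆ int(K), and every α with 0 < α ≤ 1, one has c^{−d} · N_{G°}(K°, α) ≤ N_K(G, α) ≤ c^{d} · N_{G°}(K°, α), where N_K(·,·) denotes the Hilbert covering number with respect to K and N_{G°}(·,·) the Hilbert covering number with respect to G°. (Note that K° ⊆ int(G°), so the right-hand covering numbers are well defined.) -/

import Mathlib

open Set MeasureTheory Metric
open scoped Pointwise RealInnerProductSpace ENNReal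

noncomputable section

abbrev Euc (d : ℕ) := EuclideanSpace ℝ (Fin d)

/-- A convex body: a compact convex set with nonempty interior. -/
def IsConvexBody {d : ℕ} (K : Set (Euc d)) : Prop :=
  IsCompact K ∧ Convex ℝ K ∧ (interior K).Nonempty

/-- The polar of a set. -/
def polarSet {d : ℕ} (S : Set (Euc d)) : Set (Euc d) :=
  {y | ∀ x ∈ S, ⟪x, y⟫ ≤ 1}

/-- The Hilbert distance with respect to the body `K`. -/
def hilbertDist {d : ℕ} (K : Set (Euc d)) (x y : Euc d) : ℝ :=
  -(1 / 2) * Real.log ((1 - gauge ((fun k => k - x) '' K) (y - x)) *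
    (1 - gauge ((fun k => k - y) '' K) (x - y)))

/-- The Hilbert ball of radius `r` centered at `x`. -/
def hilbertBall {d : ℕ} (K : Set (Euc d)) (x : Euc d) (r : ℝ) : Set (Euc d) :=
  {y ∈ interior K | hilbertDist K x y ≤ r}

/-- The Hilbert covering number of `U` at scale `α` in the geometry induced by `K`. -/
def hilbertCov {d : ℕ} (K U : Set (Euc d)) (α : ℝ) : ℕ :=
  sInf {m : ℕ | ∃ x : Fin m → Euc d, (∀ i, x i ∈ interior K) ∧
    U ⊆ ⋃ i, hilbertBall K (x i) α}

/-- The translative covering number of `U` by translates of `α • D`. -/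
def transCov {d : ℕ} (D U : Set (Euc d)) (α : ℝ) : ℕ :=
  sInf {m : ℕ | ∃ x : Fin m → Euc d, U ⊆ ⋃ i, x i +ᵥ α • D}

/-- The Hilbert `α`-expansion of `G` in `K`. -/
def hilbertExpand {d : ℕ} (K G : Set (Euc d)) (α : ℝ) : Set (Euc d) :=
  {x ∈ interior K | sInf (hilbertDist K x '' G) ≤ α}

/-- The Lebesgue volume of the Euclidean unit ball in `ℝ^d`. -/
def ωd (d : ℕ) : ℝ := (volume (ball (0 : Euc d) 1)).toReal

/-- The Hilbert Finsler unit ball at `y` in the geometry induced by `K`. -/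
def finslerBall {d : ℕ} (K : Set (Euc d)) (y : Euc d) : Set (Euc d) :=
  {v | gauge ((fun k => k - y) '' K) v + gauge ((fun k => k - y) '' K) (-v) ≤ 2}

/-- The Hilbert Holmes–Thompson volume of `U` in the geometry induced by `K`. -/
def volH {d : ℕ} (K U : Set (Euc d)) : ℝ :=
  (1 / ωd d) * ∫ y in U, (volume (polarSet (finslerBall K y))).toReal

/-- The recentered Macbeath region `A(x) := (K ∩ (2x − K)) − x`. -/
def macbeathA {d : ℕ} (K : Set (Euc d)) (x : Euc d) : Set (Euc d) :=
  (fun k => k - x) '' (K ∩ ((fun k => (2 : ℝ) • x - k) '' K))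

/-!
Take a maximal disjoint family of Macbeath regions of `K`, of scale `α / 12` and centred in `G`. The
Hilbert `α`-balls at the centres cover `G`, so it suffices to bound the number of regions by
`c ^ d * N_{G°}(K°, α)`. Let `U` be their union and integrate the kernel
`d! / (1 - ⟪x, y⟫) ^ (d + 1)` over `U × K°`. For fixed `x`, the integral over `K°` is
`∫ exp (⟪p, x⟫ - h_K(p)) dp`, a multiple of the volume of the polar of `K - x`.

* Each region contributes at least `(c α) ^ d`: the Rogers–Shephard inequality replaces `K - z`, for
  `z` in the region, by its symmetrization, and the Bourgain–Milman inequality bounds the volume of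
  the polar from below.
* The part of `K°` in a Hilbert `α`-ball of `G°` contributes at most `(C α) ^ d`: it lies in a
  Macbeath region of scale `O(α)` of `(U ∪ G)°`, and the Blaschke–Santaló inequality bounds the
  integral of the kernel over `U`.

The other inequality is the same one for the pair `K° ⊆ G°`, by the bipolar theorem.

Both volume product inequalities come from the mean `m(x)` of the measure on a symmetric body `L`
with density proportional to `exp ⟪x, ·⟫`. Its derivative `Dm(x)` is a covariance operator, and `m`
is injective with values in `L`, so the integral of `det Dm` is at most the volume of `L`. For
Blaschke–Santaló, the maximal density bounds `det Dm(x)` below by a multiple of `exp (-h_L(x))`. For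
Bourgain–Milman, let `g = (m, m)` on the double of the space, with complex structure `J`. The
Gaussian integral of the map `p + s (s + J) (p - g p) / 2` is constant for small real `s`, hence by
analytic continuation up to `s = I`, where it is at most the integral of
`exp (-(⟪x, m x⟫ + ⟪y, m y⟫) / 2) * |det ((Dm(x) + Dm(y)) / 2)|`. Here
`⟪x, m x⟫ ≥ h_L(x) / 2 - O(d)`, and for fixed `x + y` the determinant is the Jacobian of a map into
`L`, which leaves `C ^ d * volume L * ∫ exp (-h_L)`.
-/

open Filter ProbabilityTheory Module InnerProductSpace
open scoped Topology NNReal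

section SupportFunction

variable {V : Type*} [NormedAddCommGroup V] [InnerProductSpace ℝ V] {K : Set V}

/-- The support function `h_K(x) = sup {⟪x, y⟫ | y ∈ K}`. -/
def supportFun (K : Set V) (x : V) : ℝ := sSup ((fun y => ⟪x, y⟫) '' K)

lemma inner_le_supportFun (hK : IsCompact K) (x : V) {y : V} (hy : y ∈ K) :
    ⟪x, y⟫ ≤ supportFun K x :=
  le_csSup (hK.image (by fun_prop)).bddAbove (mem_image_of_mem _ hy)

lemma supportFun_le (hne : K.Nonempty) {x : V} {c : ℝ} (h : ∀ y ∈ K, ⟪x, y⟫ ≤ c) :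
    supportFun K x ≤ c :=
  csSup_le (hne.image _) (forall_mem_image.2 h)

lemma exists_inner_eq_supportFun (hK : IsCompact K) (hne : K.Nonempty) (x : V) :
    ∃ y ∈ K, ⟪x, y⟫ = supportFun K x :=
  (hK.image (by fun_prop : Continuous fun y => ⟪x, y⟫)).sSup_mem (hne.image _)

lemma supportFun_add_le (hK : IsCompact K) (hne : K.Nonempty) (x y : V) :
    supportFun K (x + y) ≤ supportFun K x + supportFun K y :=
  supportFun_le hne fun v hv => by
    rw [inner_add_left]
    exact add_le_add (inner_le_supportFun hK x hv) (inner_le_supportFun hK y hv)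

lemma supportFun_smul (K : Set V) {c : ℝ} (hc : 0 ≤ c) (x : V) :
    supportFun K (c • x) = c * supportFun K x := by
  have himage : (fun y => ⟪c • x, y⟫) '' K = c • ((fun y => ⟪x, y⟫) '' K) := by
    simp only [← image_smul, image_image, real_inner_smul_left, smul_eq_mul]
  rw [supportFun, himage, Real.sSup_smul_of_nonneg hc, smul_eq_mul, supportFun]

lemma supportFun_zero (K : Set V) : supportFun K 0 = 0 := by
  simpa using supportFun_smul K le_rfl 0

lemma supportFun_neg_set (K : Set V) (x : V) : supportFun (-K) x = supportFun K (-x) := by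
  simp only [supportFun, ← image_neg_eq_neg, image_image, inner_neg_left, inner_neg_right]

lemma continuous_supportFun (hK : IsCompact K) (hne : K.Nonempty) :
    Continuous (supportFun K) := by
  obtain ⟨R, hR⟩ := hK.isBounded.exists_norm_le
  have hle (x : V) : supportFun K x ≤ R * ‖x‖ := supportFun_le hne fun y hy => by
    rw [mul_comm]
    exact (real_inner_le_norm x y).trans (by gcongr; exact hR y hy)
  refine (LipschitzWith.of_le_add_mul R.toNNReal fun x y => ?_).continuous
  have hsub := supportFun_add_le hK hne (x - y) y
  rw [sub_add_cancel] at hsub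
  have hR0 : 0 ≤ R := (norm_nonneg _).trans (hR _ hne.some_mem)
  rw [Real.coe_toNNReal R hR0, dist_eq_norm]
  linarith [hle (x - y)]

lemma exists_pos_mul_norm_le_supportFun (hK : IsCompact K) (h0 : 0 ∈ interior K) :
    ∃ δ > 0, ∀ x, δ * ‖x‖ ≤ supportFun K x := by
  obtain ⟨δ, hδ, hball⟩ := nhds_basis_closedBall.mem_iff.1 (mem_interior_iff_mem_nhds.1 h0)
  refine ⟨δ, hδ, fun x => ?_⟩
  rcases eq_or_ne x 0 with rfl | hx
  · simpa using inner_le_supportFun hK 0 (interior_subset h0)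
  have hmem : (δ / ‖x‖) • x ∈ K := hball <| by
    rw [mem_closedBall_zero_iff, norm_smul, Real.norm_of_nonneg (by positivity),
      div_mul_cancel₀ _ (norm_ne_zero_iff.2 hx)]
  calc δ * ‖x‖ = ⟪x, (δ / ‖x‖) • x⟫ := by
        rw [real_inner_smul_right, real_inner_self_eq_norm_sq]
        field_simp
    _ ≤ supportFun K x := inner_le_supportFun hK x hmem

lemma supportFun_nonneg (hK : IsCompact K) (h0 : 0 ∈ K) (x : V) : 0 ≤ supportFun K x := by
  simpa using inner_le_supportFun hK x h0

lemma mem_of_forall_inner_le_supportFun [CompleteSpace V] (hK : IsClosed K) (hconv : Convex ℝ K)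
    (hne : K.Nonempty) {y : V} (h : ∀ x, ⟪x, y⟫ ≤ supportFun K x) : y ∈ K := by
  by_contra hy
  obtain ⟨f, u, hfK, hfy⟩ := geometric_hahn_banach_closed_point hconv hK hy
  have hf (v : V) : ⟪(toDual ℝ V).symm f, v⟫ = f v := toDual_symm_apply
  have hle := (h ((toDual ℝ V).symm f)).trans
    (supportFun_le hne fun v hv => (hf v).trans_le (hfK v hv).le)
  rw [hf] at hle
  exact hle.not_gt hfy

end SupportFunction

section CovarianceDeterminant

variable {V : Type*} [NormedAddCommGroup V] [InnerProductSpace ℝ V] [FiniteDimensional ℝ V]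

lemma exists_mul_adjoint_self_eq {S : V →ₗ[ℝ] V} (hS : S.IsPositive) :
    ∃ T : V →ₗ[ℝ] V, T * T.adjoint = S := by
  let e := LinearMap.toMatrixOrthonormal (stdOrthonormalBasis ℝ V)
  have hpos : (e S).PosSemidef := (LinearMap.posSemidef_toMatrix_iff _).2 hS
  open scoped MatrixOrder Matrix.Norms.L2Operator in
  obtain ⟨B, hB⟩ := CStarAlgebra.nonneg_iff_eq_mul_star_self.1 hpos.nonneg
  refine ⟨e.symm B, ?_⟩
  rw [← LinearMap.star_eq_adjoint, ← map_star, ← map_mul, ← hB, e.symm_apply_apply]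

lemma det_adjoint_real (T : V →ₗ[ℝ] V) : LinearMap.det T.adjoint = LinearMap.det T := by
  let b := stdOrthonormalBasis ℝ V
  rw [← LinearMap.det_toMatrix b.toBasis, LinearMap.toMatrix_adjoint, Matrix.det_conjTranspose,
    LinearMap.det_toMatrix, star_trivial]

variable [MeasurableSpace V] [BorelSpace V]

lemma integrable_exp_neg_half_norm_sq :
    Integrable fun v : V => Real.exp (-(1 / 2) * ‖v‖ ^ 2) := by
  have h := GaussianFourier.integral_rexp_neg_mul_sq_norm (V := V) (b := 1 / 2) (by norm_num)
  exact .of_integral_ne_zero (by rw [h]; positivity)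

lemma integral_exp_neg_half_norm_sq :
    ∫ v : V, Real.exp (-(1 / 2) * ‖v‖ ^ 2) = √((2 * Real.pi) ^ finrank ℝ V) := by
  rw [GaussianFourier.integral_rexp_neg_mul_sq_norm (by norm_num), Real.sqrt_eq_rpow,
    ← Real.rpow_natCast_mul (by positivity)]
  congr 1 <;> ring

lemma map_linearEquiv_volume (L : V ≃ₗ[ℝ] V) :
    Measure.map L volume = ENNReal.ofReal |(LinearMap.det (L : V →ₗ[ℝ] V))⁻¹| • volume :=
  Measure.map_linearMap_addHaar_eq_smul_addHaar volume L.isUnit_det'.ne_zero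

lemma measurableEmbedding_linearEquiv (L : V ≃ₗ[ℝ] V) : MeasurableEmbedding L :=
  L.toContinuousLinearEquiv.toHomeomorph.measurableEmbedding

lemma integrable_comp_linearEquiv {f : V → ℝ} (hf : Integrable f) (L : V ≃ₗ[ℝ] V) :
    Integrable fun v => f (L v) := by
  refine (measurableEmbedding_linearEquiv L).integrable_map_iff.1 ?_
  rw [map_linearEquiv_volume]
  exact hf.smul_measure ENNReal.ofReal_ne_top

lemma integral_comp_linearEquiv (f : V → ℝ) (L : V ≃ₗ[ℝ] V) :
    ∫ v, f (L v) = |(LinearMap.det (L : V →ₗ[ℝ] V))⁻¹| * ∫ v, f v := by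
  rw [← (measurableEmbedding_linearEquiv L).integral_map, map_linearEquiv_volume,
    integral_smul_measure, ENNReal.toReal_ofReal (abs_nonneg _), smul_eq_mul]

/-- The covariance operator `S` of `μ`, given by `⟪S v, w⟫ = cov(⟪v, ·⟫, ⟪w, ·⟫)`; Mathlib's
`covarianceOperator` is its uncentered version. -/
def centeredCovOperator (μ : Measure V) : V →L[ℝ] V :=
  continuousLinearMapOfBilin (covarianceBilin μ)

variable {μ : Measure V}

lemma inner_centeredCovOperator (μ : Measure V) (v w : V) :
    ⟪centeredCovOperator μ v, w⟫ = covarianceBilin μ v w :=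
  continuousLinearMapOfBilin_apply _ v w

lemma isPositive_centeredCovOperator (μ : Measure V) :
    (centeredCovOperator μ : V →ₗ[ℝ] V).IsPositive := by
  refine ⟨fun v w => ?_, fun v => ?_⟩
  · rw [ContinuousLinearMap.coe_coe, real_inner_comm _ v, inner_centeredCovOperator,
      inner_centeredCovOperator, covarianceBilin_comm]
  · exact (covarianceBilin_self_nonneg v).trans_eq (inner_centeredCovOperator μ v v).symm

lemma volume_hyperplane {v : V} (hv : v ≠ 0) (c : ℝ) : volume {y | ⟪v, y⟫ = c} = 0 := by
  let H : AffineSubspace ℝ V := .mk' ((c / ‖v‖ ^ 2) • v) (ℝ ∙ v)ᗮ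
  have hmem (y : V) : y ∈ H ↔ ⟪v, y⟫ = c := by
    rw [AffineSubspace.mem_mk', Submodule.mem_orthogonal_singleton_iff_inner_right, vsub_eq_sub,
      inner_sub_right, real_inner_smul_right, real_inner_self_eq_norm_sq, sub_eq_zero,
      div_mul_cancel₀ _ (pow_ne_zero 2 (norm_ne_zero_iff.2 hv))]
  have hH : H ≠ ⊤ := fun htop => by
    have h (y : V) : ⟪v, y⟫ = c := (hmem y).1 (htop ▸ AffineSubspace.mem_top ℝ V y)
    exact hv (inner_self_eq_zero.1 ((h v).trans ((h 0).symm.trans (inner_zero_right v))))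
  have hset : {y | ⟪v, y⟫ = c} = H := ext fun y => (hmem y).symm
  rw [hset]
  exact Measure.addHaar_affineSubspace volume H hH

lemma inner_centeredCovOperator_self_pos [IsProbabilityMeasure μ] (hμ : MemLp id 2 μ)
    (hac : μ ≪ volume) {v : V} (hv : v ≠ 0) : 0 < ⟪centeredCovOperator μ v, v⟫ := by
  rw [inner_centeredCovOperator]
  refine (covarianceBilin_self_nonneg v).lt_of_ne' fun h => ?_
  rw [covarianceBilin_self hμ] at h
  have hconst := ae_eq_integral_of_variance_eq_zero (hμ.const_inner v) h
  have hnull := hac (volume_hyperplane hv (∫ y, ⟪v, y⟫ ∂μ))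
  obtain ⟨y, hy, hy'⟩ := (hconst.and (measure_eq_zero_iff_ae_notMem.1 hnull)).exists
  exact hy' hy

lemma integral_norm_sq_apply_sub_mean [IsFiniteMeasure μ] (hμ : MemLp id 2 μ)
    (L : V →ₗ[ℝ] V) {ι : Type*} [Fintype ι] (b : OrthonormalBasis ι ℝ V) :
    ∫ y, ‖L (y - μ[id])‖ ^ 2 ∂μ =
      ∑ i, ⟪centeredCovOperator μ (L.adjoint (b i)), L.adjoint (b i)⟫ := by
  have hint (i : ι) : Integrable (fun y => ⟪L.adjoint (b i), y - μ[id]⟫ ^ 2) μ :=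
    ((hμ.sub (memLp_const _)).const_inner _).integrable_sq
  calc ∫ y, ‖L (y - μ[id])‖ ^ 2 ∂μ = ∫ y, ∑ i, ⟪L.adjoint (b i), y - μ[id]⟫ ^ 2 ∂μ := by
        simp only [← b.sum_sq_inner_right (L _), LinearMap.adjoint_inner_left]
    _ = ∑ i, ∫ y, ⟪L.adjoint (b i), y - μ[id]⟫ ^ 2 ∂μ := integral_finsetSum _ fun i _ => hint i
    _ = _ := Finset.sum_congr rfl fun i _ => by
        rw [inner_centeredCovOperator, covarianceBilin_apply hμ]
        simp only [sq]

lemma exists_whitening [IsFiniteMeasure μ] (hμ : MemLp id 2 μ)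
    (hpos : ∀ v ≠ 0, 0 < ⟪centeredCovOperator μ v, v⟫) :
    ∃ L : V ≃ₗ[ℝ] V, (centeredCovOperator μ).det = (LinearMap.det (L : V →ₗ[ℝ] V))⁻¹ ^ 2 ∧
      ∫ y, ‖L (y - μ[id])‖ ^ 2 ∂μ = finrank ℝ V := by
  obtain ⟨T, hT⟩ := exists_mul_adjoint_self_eq (isPositive_centeredCovOperator μ)
  have hTadj (v : V) : ‖T.adjoint v‖ ^ 2 = ⟪centeredCovOperator μ v, v⟫ := by
    rw [← ContinuousLinearMap.coe_coe, ← hT, Module.End.mul_apply, ← LinearMap.adjoint_inner_right,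
      real_inner_self_eq_norm_sq]
  have hinj : Function.Injective T.adjoint := (injective_iff_map_eq_zero _).2 fun v hv => by
    by_contra hv0
    simpa [← hTadj, hv] using hpos v hv0
  have hT0 : LinearMap.det T ≠ 0 :=
    det_adjoint_real T ▸ (LinearEquiv.ofInjectiveEndo T.adjoint hinj).isUnit_det'.ne_zero
  let e := LinearMap.equivOfDetNeZero T hT0
  have hLT (w : V) : T.adjoint ((e.symm : V →ₗ[ℝ] V).adjoint w) = w :=
    ext_inner_right ℝ fun v => by
      rw [LinearMap.adjoint_inner_left, LinearMap.adjoint_inner_left]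
      exact congrArg _ (e.symm_apply_apply v)
  refine ⟨e.symm, ?_, ?_⟩
  · rw [ContinuousLinearMap.det, ← hT, map_mul, det_adjoint_real, LinearEquiv.det_coe_symm,
      inv_inv, sq]
    rfl
  · have hsum := integral_norm_sq_apply_sub_mean hμ (e.symm : V →ₗ[ℝ] V) (stdOrthonormalBasis ℝ V)
    simpa [← hTadj, hLT] using hsum

theorem one_le_mul_det_centeredCovOperator [IsProbabilityMeasure μ] (hμ : MemLp id 2 μ) {M : ℝ≥0}
    (hle : μ ≤ M • volume) :
    1 ≤ (2 * Real.pi * Real.exp 1) ^ finrank ℝ V * M ^ 2 * (centeredCovOperator μ).det := by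
  have hac : μ ≪ volume :=
    (Measure.absolutelyContinuous_of_le hle).trans Measure.smul_absolutelyContinuous
  obtain ⟨L, hdet, hL⟩ := exists_whitening hμ fun v => inner_centeredCovOperator_self_pos hμ hac
  set n := finrank ℝ V
  set q : V → ℝ := fun y => ‖L (y - μ[id])‖ ^ 2
  have hgauss : Integrable fun y => Real.exp (-(1 / 2) * q y) :=
    (integrable_comp_linearEquiv integrable_exp_neg_half_norm_sq L).comp_sub_right μ[id]
  have hq : Integrable (fun y => -(1 / 2) * q y) μ :=
    (((hμ.sub (memLp_const _)).continuousLinearMap_comp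
      (L.toContinuousLinearEquiv : V →L[ℝ] V)).integrable_norm_pow two_ne_zero).const_mul _
  have hjensen : Real.exp (-(1 / 2) * n) ≤ ∫ y, Real.exp (-(1 / 2) * q y) ∂μ := by
    rw [← hL, ← integral_const_mul]
    exact convexOn_exp.map_integral_le Real.continuous_exp.continuousOn isClosed_univ
      (by simp) hq (hgauss.smul_measure_nnreal.mono_measure hle)
  have hvol : ∫ y, Real.exp (-(1 / 2) * q y) ∂μ ≤
      M * (|(LinearMap.det (L : V →ₗ[ℝ] V))⁻¹| * √((2 * Real.pi) ^ n)) := by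
    calc ∫ y, Real.exp (-(1 / 2) * q y) ∂μ ≤ ∫ y, Real.exp (-(1 / 2) * q y) ∂(M • volume) :=
          integral_mono_measure hle (.of_forall fun _ => (Real.exp_pos _).le)
            hgauss.smul_measure_nnreal
      _ = M * ∫ y, Real.exp (-(1 / 2) * ‖L y‖ ^ 2) := by
          rw [integral_smul_nnreal_measure, NNReal.smul_def, smul_eq_mul,
            integral_sub_right_eq_self fun y => Real.exp (-(1 / 2) * ‖L y‖ ^ 2)]
      _ = _ := by rw [integral_comp_linearEquiv fun y => Real.exp (-(1 / 2) * ‖y‖ ^ 2),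
            integral_exp_neg_half_norm_sq]
  have hsq := pow_le_pow_left₀ (Real.exp_pos _).le (hjensen.trans hvol) 2
  rw [← Real.exp_nat_mul, mul_pow, mul_pow, sq_abs, ← hdet, Real.sq_sqrt (by positivity)] at hsq
  have hexp : Real.exp 1 ^ n * Real.exp ((2 : ℕ) * (-(1 / 2) * n)) = 1 := by
    rw [← Real.exp_nat_mul, ← Real.exp_add, Real.exp_eq_one_iff]
    push_cast; ring
  calc (1 : ℝ) = Real.exp 1 ^ n * Real.exp ((2 : ℕ) * (-(1 / 2) * n)) := hexp.symm
    _ ≤ Real.exp 1 ^ n * (M ^ 2 * ((centeredCovOperator μ).det * (2 * Real.pi) ^ n)) := by gcongr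
    _ = _ := by rw [mul_pow]; ring

end CovarianceDeterminant

section GibbsMeasure

variable {V : Type*} [NormedAddCommGroup V] [InnerProductSpace ℝ V] [FiniteDimensional ℝ V]
  [MeasurableSpace V] [BorelSpace V] {K : Set V}

lemma hasFDerivAt_setIntegral_exp_inner_smul {E : Type*} [NormedAddCommGroup E]
    [InnerProductSpace ℝ E] [FiniteDimensional ℝ E] (hK : IsCompact K) {f : V → E}
    (hf : Continuous f) (x : V) :
    HasFDerivAt (fun x => ∫ y in K, Real.exp ⟪x, y⟫ • f y)
      (∫ y in K, Real.exp ⟪x, y⟫ • rankOne ℝ (f y) y) x := by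
  obtain ⟨R, hR⟩ := hK.isBounded.exists_norm_le
  have hinner (z : V) (hz : z ∈ ball x 1) {y : V} (hy : y ∈ K) : ⟪z, y⟫ ≤ (‖x‖ + 1) * R := by
    have hnorm : ‖z‖ ≤ ‖x‖ + 1 := by
      linarith [norm_sub_norm_le z x, mem_ball_iff_norm.1 hz]
    exact (real_inner_le_norm z y).trans (by gcongr; exact hR y hy)
  have hcont (z : V) : Continuous fun y => Real.exp ⟪z, y⟫ • f y := by fun_prop
  have hrank : Continuous fun y => rankOne ℝ (f y) y :=
    ((rankOne ℝ).continuous.comp hf).clm_apply continuous_id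
  have hcont' (z : V) : Continuous fun y => Real.exp ⟪z, y⟫ • rankOne ℝ (f y) y := by fun_prop
  refine hasFDerivAt_integral_of_dominated_of_fderiv_le (ball_mem_nhds x one_pos)
    (F' := fun z y => Real.exp ⟪z, y⟫ • rankOne ℝ (f y) y)
    (bound := fun y => Real.exp ((‖x‖ + 1) * R) * ‖rankOne ℝ (f y) y‖)
    (.of_forall fun z => (hcont z).aestronglyMeasurable)
    ((hcont x).continuousOn.integrableOn_compact hK) (hcont' x).aestronglyMeasurable ?_
    ((hrank.norm.const_mul _).continuousOn.integrableOn_compact hK) ?_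
  · filter_upwards [ae_restrict_mem hK.measurableSet] with y hy z hz
    rw [norm_smul, Real.norm_of_nonneg (Real.exp_pos _).le]
    gcongr
    exact hinner z hz hy
  · refine .of_forall fun y z _ => ?_
    have hin : HasFDerivAt (fun z => ⟪z, y⟫) (innerSL ℝ y) z := by
      simp only [real_inner_comm y]
      exact (innerSL ℝ y).hasFDerivAt
    convert hin.exp.smul_const (f y) using 1
    ext v
    simp [rankOne_apply, mul_smul]

lemma hasFDerivAt_setIntegral_exp_inner (hK : IsCompact K) (x : V) :
    HasFDerivAt (fun x => ∫ y in K, Real.exp ⟪x, y⟫)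
      (innerSL ℝ (∫ y in K, Real.exp ⟪x, y⟫ • y)) x := by
  have hint : IntegrableOn (fun y => Real.exp ⟪x, y⟫ • y) K :=
    (by fun_prop : Continuous _).continuousOn.integrableOn_compact hK
  have h := hasFDerivAt_setIntegral_exp_inner_smul (E := ℝ) hK (continuous_const (y := 1)) x
  simp only [smul_eq_mul, mul_one] at h
  refine h.congr_fderiv ?_
  rw [← (innerSL ℝ).integral_comp_comm hint]
  refine integral_congr_ae (.of_forall fun y => ?_)
  ext v
  simp only [FunLike.coe_smul, Pi.smul_apply, map_smul, rankOne_apply]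
  simp
  rfl

/-- The Gibbs measure of `K` at `x`: the probability measure on `K` whose density is
proportional to `exp ⟪x, ·⟫`. -/
def gibbs (K : Set V) (x : V) : Measure V := (volume.restrict K).tilted fun y => ⟪x, y⟫

/-- The mean of the Gibbs measure, i.e. the gradient of `x ↦ log ∫_K exp ⟪x, ·⟫`. -/
def gibbsMean (K : Set V) (x : V) : V := (gibbs K x)[id]

lemma integrableOn_exp_inner (hK : IsCompact K) (x : V) :
    IntegrableOn (fun y => Real.exp ⟪x, y⟫) K :=
  (by fun_prop : Continuous _).continuousOn.integrableOn_compact hK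

lemma integral_gibbs {E : Type*} [NormedAddCommGroup E] [NormedSpace ℝ E] (K : Set V) (x : V)
    (f : V → E) : ∫ y, f y ∂gibbs K x =
      (∫ y in K, Real.exp ⟪x, y⟫)⁻¹ • ∫ y in K, Real.exp ⟪x, y⟫ • f y := by
  rw [gibbs, integral_tilted, ← integral_smul]
  simp only [smul_smul, div_eq_inv_mul]

lemma gibbs_absolutelyContinuous (K : Set V) (x : V) : gibbs K x ≪ volume :=
  (tilted_absolutelyContinuous _ _).trans Measure.restrict_le_self.absolutelyContinuous

lemma ae_gibbs_mem (hK : IsCompact K) (x : V) : ∀ᵐ y ∂gibbs K x, y ∈ K :=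
  (tilted_absolutelyContinuous _ _).ae_le (ae_restrict_mem hK.measurableSet)

section

variable (hK : IsCompact K) (hvol : volume K ≠ 0)
include hK hvol

lemma setIntegral_exp_inner_pos (x : V) : 0 < ∫ y in K, Real.exp ⟪x, y⟫ := by
  have : NeZero (volume.restrict K) := ⟨by rwa [Ne, Measure.restrict_eq_zero]⟩
  exact integral_exp_pos (integrableOn_exp_inner hK x)

lemma isProbabilityMeasure_gibbs (x : V) : IsProbabilityMeasure (gibbs K x) := by
  have : NeZero (volume.restrict K) := ⟨by rwa [Ne, Measure.restrict_eq_zero]⟩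
  exact isProbabilityMeasure_tilted (integrableOn_exp_inner hK x)

lemma memLp_id_gibbs (x : V) : MemLp id 2 (gibbs K x) := by
  have := isProbabilityMeasure_gibbs hK hvol x
  obtain ⟨R, hR⟩ := hK.isBounded.exists_norm_le
  exact .of_bound aestronglyMeasurable_id R ((ae_gibbs_mem hK x).mono hR)

lemma gibbsMean_mem (hconv : Convex ℝ K) (x : V) : gibbsMean K x ∈ K := by
  have := isProbabilityMeasure_gibbs hK hvol x
  exact hconv.integral_mem hK.isClosed (ae_gibbs_mem hK x)
    ((memLp_id_gibbs hK hvol x).integrable one_le_two)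

lemma hasFDerivAt_gibbsMean (x : V) :
    HasFDerivAt (gibbsMean K) (centeredCovOperator (gibbs K x)) x := by
  have := isProbabilityMeasure_gibbs hK hvol x
  have hmem := memLp_id_gibbs hK hvol x
  have hZ0 := (setIntegral_exp_inner_pos hK hvol x).ne'
  have hmean := ((hasDerivAt_inv hZ0).comp_hasFDerivAt x
    (hasFDerivAt_setIntegral_exp_inner hK x)).smul
    (hasFDerivAt_setIntegral_exp_inner_smul hK continuous_id x)
  refine (hmean.congr_of_eventuallyEq (.of_forall fun z => integral_gibbs K z id)).congr_fderiv ?_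
  ext v
  refine ext_inner_right ℝ fun w => ?_
  have hcov : covarianceBilin (gibbs K x) v w =
      ∫ y, ⟪v, y⟫ * ⟪w, y⟫ ∂gibbs K x - ⟪v, gibbsMean K x⟫ * ⟪w, gibbsMean K x⟫ := by
    have hv : MemLp (fun y => ⟪v, y⟫) 2 (gibbs K x) := hmem.const_inner v
    have hw : MemLp (fun y => ⟪w, y⟫) 2 (gibbs K x) := hmem.const_inner w
    have hid : Integrable (fun y : V => y) (gibbs K x) := hmem.integrable one_le_two
    rw [covarianceBilin_apply_eq_cov hmem, covariance_eq_sub hv hw, integral_inner hid,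
      integral_inner hid]
    rfl
  have hsecond : ⟪w, (∫ y in K, Real.exp ⟪x, y⟫ • rankOne ℝ y y) v⟫ =
      ∫ y in K, Real.exp ⟪x, y⟫ * (⟪v, y⟫ * ⟪w, y⟫) := by
    have hrank : Continuous fun y : V => rankOne ℝ y y :=
      (rankOne ℝ).continuous.clm_apply continuous_id
    have hint : IntegrableOn (fun y : V => Real.exp ⟪x, y⟫ • rankOne ℝ y y) K :=
      (by fun_prop : Continuous _).continuousOn.integrableOn_compact hK
    rw [ContinuousLinearMap.integral_apply hint,
      ← integral_inner (hint.apply_continuousLinearMap v)]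
    congr with y
    simp [rankOne_apply, inner_smul_right, real_inner_comm]
  rw [inner_centeredCovOperator, hcov, integral_gibbs, gibbsMean, integral_gibbs, real_inner_comm]
  simp [hsecond, inner_add_right, real_inner_smul_right, real_inner_comm]
  ring

lemma inner_fderiv_gibbsMean_pos (x : V) {v : V} (hv : v ≠ 0) :
    0 < ⟪centeredCovOperator (gibbs K x) v, v⟫ :=
  have := isProbabilityMeasure_gibbs hK hvol x
  inner_centeredCovOperator_self_pos (memLp_id_gibbs hK hvol x) (gibbs_absolutelyContinuous K x) hv

end

end GibbsMeasure

section SymmetricBodies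

variable {V : Type*} [NormedAddCommGroup V] [InnerProductSpace ℝ V] {K : Set V}

/-- A compact convex set with nonempty interior that is symmetric about the origin. -/
structure IsSymmConvexBody (K : Set V) : Prop where
  isCompact : IsCompact K
  convex : Convex ℝ K
  neg_mem : ∀ y ∈ K, -y ∈ K
  interior_nonempty : (interior K).Nonempty

lemma injective_of_inner_fderiv_pos {F : V → V} {F' : V → V →L[ℝ] V}
    (hF : ∀ x, HasFDerivAt F (F' x) x) (hpos : ∀ x v, v ≠ 0 → 0 < ⟪F' x v, v⟫) :
    Function.Injective F := by
  intro x y hxy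
  by_contra hne
  have hv : y - x ≠ 0 := sub_ne_zero.2 (Ne.symm hne)
  have hderiv (t : ℝ) : HasDerivAt (fun t : ℝ => ⟪F (x + t • (y - x)), y - x⟫)
      ⟪F' (x + t • (y - x)) (y - x), y - x⟫ t := by
    have hline : HasDerivAt (fun t : ℝ => x + t • (y - x)) (y - x) t := by
      simpa using ((hasDerivAt_id t).smul_const (y - x)).const_add x
    simpa using ((hF _).comp_hasDerivAt t hline).inner ℝ (hasDerivAt_const t (y - x))
  have hmono := strictMono_of_deriv_pos fun t => (hderiv t).deriv.symm ▸ hpos _ _ hv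
  simpa [hxy] using hmono zero_lt_one

section

variable [FiniteDimensional ℝ V] [MeasurableSpace V] [BorelSpace V]

/-- The integral of `exp (-h_K)`, which is `(dim V)! * volume K°`. -/
def polarMass (K : Set V) : ℝ≥0∞ := ∫⁻ x, ENNReal.ofReal (Real.exp (-supportFun K x))

lemma lintegral_abs_det_fderiv_le_volume {F : V → V} {F' : V → V →L[ℝ] V}
    (hF : ∀ x, HasFDerivAt F (F' x) x) (hpos : ∀ x v, v ≠ 0 → 0 < ⟪F' x v, v⟫)
    (hmem : ∀ x, F x ∈ K) : ∫⁻ x, ENNReal.ofReal |(F' x).det| ≤ volume K := by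
  rw [← setLIntegral_univ, lintegral_abs_det_fderiv_eq_addHaar_image volume .univ
    (fun x _ => (hF x).hasFDerivWithinAt) (injective_of_inner_fderiv_pos hF hpos).injOn]
  exact measure_mono (by rintro _ ⟨x, -, rfl⟩; exact hmem x)

end

namespace IsSymmConvexBody

variable (hK : IsSymmConvexBody K)
include hK

lemma nonempty : K.Nonempty := hK.interior_nonempty.mono interior_subset

lemma zero_mem_interior : 0 ∈ interior K := by
  obtain ⟨y, hy⟩ := hK.interior_nonempty
  simpa using hK.convex.combo_interior_self_mem_interior hy
    (hK.neg_mem y (interior_subset hy)) one_half_pos one_half_pos.le (add_halves 1)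

variable [FiniteDimensional ℝ V] [MeasurableSpace V] [BorelSpace V]

lemma volume_ne_zero : volume K ≠ 0 :=
  (Measure.measure_pos_of_nonempty_interior _ hK.interior_nonempty).ne'

lemma volume_ne_top : volume K ≠ ∞ := hK.isCompact.measure_ne_top

lemma lintegral_det_gibbs_le :
    ∫⁻ x, ENNReal.ofReal |(centeredCovOperator (gibbs K x)).det| ≤ volume K :=
  lintegral_abs_det_fderiv_le_volume (hasFDerivAt_gibbsMean hK.isCompact hK.volume_ne_zero)
    (fun x _ => inner_fderiv_gibbsMean_pos hK.isCompact hK.volume_ne_zero x)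
    (gibbsMean_mem hK.isCompact hK.volume_ne_zero hK.convex)

lemma lintegral_det_gibbs_midpoint_le (p : V) :
    ∫⁻ x, ENNReal.ofReal |((2⁻¹ : ℝ) • (centeredCovOperator (gibbs K x) +
      centeredCovOperator (gibbs K (p - x)))).det| ≤ volume K := by
  have hderiv := hasFDerivAt_gibbsMean hK.isCompact hK.volume_ne_zero
  have hpos := inner_fderiv_gibbsMean_pos hK.isCompact hK.volume_ne_zero
  have hmem := gibbsMean_mem hK.isCompact hK.volume_ne_zero hK.convex
  refine lintegral_abs_det_fderiv_le_volume
    (F := fun x => (2⁻¹ : ℝ) • (gibbsMean K x - gibbsMean K (p - x))) (fun x => ?_)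
    (fun x v hv => ?_) fun x => ?_
  · have hsub : HasFDerivAt (fun x => p - x) (-.id ℝ V) x := (hasFDerivAt_id x).const_sub p
    refine (((hderiv x).sub ((hderiv (p - x)).comp x hsub)).const_smul 2⁻¹).congr_fderiv ?_
    ext v
    simp
  · simp only [smul_apply, add_apply, real_inner_smul_left,
      inner_add_left]
    have h₁ := hpos x hv
    have h₂ := hpos (p - x) hv
    positivity
  · have hmid := hK.convex.midpoint_mem (hmem x) (hK.neg_mem _ (hmem (p - x)))
    rwa [midpoint_eq_smul_add, ← sub_eq_add_neg, invOf_eq_inv] at hmid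

/-- The homothetic copy `¾ p + ¼ K`, where `p ∈ K` maximises `⟪x, ·⟫`, carries enough mass. -/
lemma exp_mul_volume_le_setIntegral_exp_inner (x : V) :
    (1 / 4) ^ finrank ℝ V * Real.exp (supportFun K x / 2) * volume.real K ≤
      ∫ y in K, Real.exp ⟪x, y⟫ := by
  obtain ⟨p, hp, hpx⟩ := exists_inner_eq_supportFun hK.isCompact hK.nonempty x
  set S := AffineMap.homothety p (1 / 4 : ℝ) '' K with hS
  have hSK : S ⊆ K := by
    rintro _ ⟨y, hy, rfl⟩
    have hquarter : (1 / 4 : ℝ) ∈ Icc 0 1 := by constructor <;> norm_num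
    exact hK.convex.lineMap_mem hp hy hquarter
  have hvol : volume.real S = (1 / 4) ^ finrank ℝ V * volume.real K := by
    rw [measureReal_def, hS, Measure.addHaar_image_homothety, ENNReal.toReal_mul,
      ENNReal.toReal_ofReal (abs_nonneg _), abs_of_pos (by positivity), measureReal_def]
  have hScompact : IsCompact S := hK.isCompact.image (AffineMap.homothety_continuous p _)
  have hlower : ∀ y ∈ S, Real.exp (supportFun K x / 2) ≤ Real.exp ⟪x, y⟫ := by
    rintro _ ⟨y, hy, rfl⟩
    have hneg := inner_le_supportFun hK.isCompact x (hK.neg_mem y hy)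
    rw [inner_neg_right] at hneg
    rw [AffineMap.homothety_apply, vsub_eq_sub, vadd_eq_add, inner_add_right,
      real_inner_smul_right, inner_sub_right, hpx]
    gcongr
    linarith
  calc _ = Real.exp (supportFun K x / 2) * volume.real S := by rw [hvol]; ring
    _ ≤ ∫ y in S, Real.exp ⟪x, y⟫ := setIntegral_ge_of_const_le_real hScompact.measurableSet
        hScompact.measure_ne_top hlower (integrableOn_exp_inner hScompact x)
    _ ≤ ∫ y in K, Real.exp ⟪x, y⟫ := setIntegral_mono_set (integrableOn_exp_inner hK.isCompact x)
        (.of_forall fun _ => (Real.exp_pos _).le) hSK.eventuallyLE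

lemma gibbs_le_smul_volume (x : V) :
    gibbs K x ≤ (4 ^ finrank ℝ V * Real.exp (supportFun K x / 2) / volume.real K).toNNReal •
      (volume : Measure V) := by
  have hV : 0 < volume.real K := ENNReal.toReal_pos hK.volume_ne_zero hK.volume_ne_top
  have hZ := setIntegral_exp_inner_pos hK.isCompact hK.volume_ne_zero x
  have hdensity : ∀ᵐ y ∂volume.restrict K,
      ENNReal.ofReal (Real.exp ⟪x, y⟫ / ∫ z in K, Real.exp ⟪x, z⟫) ≤ ENNReal.ofReal
        (4 ^ finrank ℝ V * Real.exp (supportFun K x / 2) / volume.real K) := by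
    filter_upwards [ae_restrict_mem hK.isCompact.measurableSet] with y hy
    refine ENNReal.ofReal_le_ofReal ?_
    rw [div_le_div_iff₀ hZ hV]
    calc Real.exp ⟪x, y⟫ * volume.real K
        ≤ Real.exp (supportFun K x) * volume.real K := by
          gcongr; exact inner_le_supportFun hK.isCompact x hy
      _ = 4 ^ finrank ℝ V * Real.exp (supportFun K x / 2) *
          ((1 / 4) ^ finrank ℝ V * Real.exp (supportFun K x / 2) * volume.real K) := by
          rw [one_div, inv_pow]
          nth_rw 1 [← add_halves (supportFun K x)]
          rw [Real.exp_add]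
          field_simp
      _ ≤ _ := by gcongr; exact hK.exp_mul_volume_le_setIntegral_exp_inner x
  calc gibbs K x ≤ (volume.restrict K).withDensity fun _ => ENNReal.ofReal
        (4 ^ finrank ℝ V * Real.exp (supportFun K x / 2) / volume.real K) :=
      withDensity_mono hdensity
    _ ≤ _ := by
      rw [withDensity_const]
      exact Measure.le_iff.2 fun s _ => by
        simp only [Measure.smul_apply]
        exact mul_le_mul_right (Measure.restrict_le_self s) _

lemma half_supportFun_sub_le_inner_gibbsMean (x : V) :
    supportFun K x / 2 - finrank ℝ V * Real.log 4 ≤ ⟪x, gibbsMean K x⟫ := by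
  have := isProbabilityMeasure_gibbs hK.isCompact hK.volume_ne_zero x
  have hV : 0 < volume.real K := ENNReal.toReal_pos hK.volume_ne_zero hK.volume_ne_top
  have hZ := setIntegral_exp_inner_pos hK.isCompact hK.volume_ne_zero x
  have hid := (memLp_id_gibbs hK.isCompact hK.volume_ne_zero x).integrable one_le_two
  have hinv : ∫ y, Real.exp (-⟪x, y⟫) ∂gibbs K x =
      volume.real K / ∫ y in K, Real.exp ⟪x, y⟫ := by
    simp [integral_gibbs, ← Real.exp_add, div_eq_inv_mul]
  have hjensen : Real.exp (-⟪x, gibbsMean K x⟫) ≤ ∫ y, Real.exp (-⟪x, y⟫) ∂gibbs K x := by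
    rw [gibbsMean, ← integral_inner hid, ← integral_neg]
    refine convexOn_exp.map_integral_le Real.continuous_exp.continuousOn isClosed_univ
      (.of_forall fun _ => mem_univ _) (hid.const_inner x).neg ?_
    rw [gibbs, integrable_tilted_iff (integrableOn_exp_inner hK.isCompact x)]
    simp only [Function.comp_apply, smul_eq_mul, id, ← Real.exp_add, add_neg_cancel,
      Real.exp_zero]
    exact integrableOn_const hK.volume_ne_top
  rw [hinv, le_div_iff₀ hZ] at hjensen
  have hle := (mul_le_mul_of_nonneg_left (hK.exp_mul_volume_le_setIntegral_exp_inner x)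
    (Real.exp_pos (-⟪x, gibbsMean K x⟫)).le).trans hjensen
  have hexp :
      Real.exp (supportFun K x / 2 - finrank ℝ V * Real.log 4 - ⟪x, gibbsMean K x⟫) ≤ 1 := by
    rw [← mul_assoc, mul_le_iff_le_one_left hV] at hle
    refine le_of_eq_of_le ?_ hle
    rw [sub_sub, Real.exp_sub, Real.exp_add, Real.exp_nat_mul, Real.exp_log (by norm_num),
      Real.exp_neg, one_div, inv_pow]
    field_simp
  linarith [Real.exp_le_one_iff.1 hexp]

/-- The Blaschke–Santaló inequality up to an exponential factor. -/
lemma volume_mul_polarMass_le : volume K * polarMass K ≤ 300 ^ finrank ℝ V := by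
  have hV : 0 < volume.real K := ENNReal.toReal_pos hK.volume_ne_zero hK.volume_ne_top
  have hpoint (x : V) : volume.real K ^ 2 * Real.exp (-supportFun K x) ≤
      300 ^ finrank ℝ V * |(centeredCovOperator (gibbs K x)).det| := by
    have := isProbabilityMeasure_gibbs hK.isCompact hK.volume_ne_zero x
    have hdet := one_le_mul_det_centeredCovOperator
      (memLp_id_gibbs hK.isCompact hK.volume_ne_zero x) (hK.gibbs_le_smul_volume x)
    rw [Real.coe_toNNReal _ (by positivity)] at hdet
    have hbase : 2 * Real.pi * Real.exp 1 * 4 ^ 2 ≤ 300 := by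
      nlinarith [Real.pi_lt_d4, Real.exp_one_lt_d9, Real.pi_pos]
    calc volume.real K ^ 2 * Real.exp (-supportFun K x)
        ≤ volume.real K ^ 2 * Real.exp (-supportFun K x) * _ :=
          le_mul_of_one_le_right (by positivity) hdet
      _ = (2 * Real.pi * Real.exp 1 * 4 ^ 2) ^ finrank ℝ V *
          (centeredCovOperator (gibbs K x)).det := by
          rw [Real.exp_neg, div_pow, mul_pow _ (Real.exp (_ / 2)), ← Real.exp_nat_mul _ 2,
            Nat.cast_two, mul_div_cancel₀ _ two_ne_zero, mul_pow _ (4 ^ 2 : ℝ), pow_right_comm]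
          field_simp
      _ ≤ (2 * Real.pi * Real.exp 1 * 4 ^ 2) ^ finrank ℝ V *
          |(centeredCovOperator (gibbs K x)).det| := by gcongr; exact le_abs_self _
      _ ≤ _ := by gcongr
  have hint : volume K ^ 2 * polarMass K ≤ 300 ^ finrank ℝ V * volume K := by
    calc _ = ∫⁻ x, ENNReal.ofReal (volume.real K ^ 2 * Real.exp (-supportFun K x)) := by
          rw [polarMass, ← lintegral_const_mul' _ _ (by finiteness [hK.volume_ne_top])]
          simp only [ENNReal.ofReal_mul (sq_nonneg (volume.real K)),
            ENNReal.ofReal_pow measureReal_nonneg, ofReal_measureReal hK.volume_ne_top]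
      _ ≤ ∫⁻ x, 300 ^ finrank ℝ V *
          ENNReal.ofReal |(centeredCovOperator (gibbs K x)).det| := by
          refine lintegral_mono fun x => (ENNReal.ofReal_le_ofReal (hpoint x)).trans_eq ?_
          rw [ENNReal.ofReal_mul (by positivity), ENNReal.ofReal_pow (by norm_num)]
          norm_num
      _ ≤ _ := by
          rw [lintegral_const_mul' _ _ (by finiteness)]
          gcongr
          exact hK.lintegral_det_gibbs_le
  rw [sq, mul_assoc, mul_comm (300 ^ _)] at hint
  exact (ENNReal.mul_le_mul_iff_right hK.volume_ne_zero hK.volume_ne_top).1 hint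

end IsSymmConvexBody

end SymmetricBodies

section ComplexDeformation

/-- Cauchy's estimate supplies the domination of the derivative. -/
lemma differentiableOn_integral_of_locally_dominated {α : Type*} [MeasurableSpace α]
    {μ : Measure α} {U : Set ℂ} (hU : IsOpen U) {f : ℂ → α → ℂ}
    (hmeas : ∀ s, AEStronglyMeasurable (f s) μ) (hf : ∀ a, DifferentiableOn ℂ (f · a) U)
    (hdom : ∀ s ∈ U, ∃ V ∈ 𝓝 s, ∃ b : α → ℝ, Integrable b μ ∧ ∀ z ∈ V, ∀ a, ‖f z a‖ ≤ b a) :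
    DifferentiableOn ℂ (fun s => ∫ a, f s a ∂μ) U := by
  intro s hs
  obtain ⟨V, hV, b, hb, hle⟩ := hdom s hs
  obtain ⟨r, hr, hball⟩ := nhds_basis_closedBall.mem_iff.1 (inter_mem (hU.mem_nhds hs) hV)
  have hsub {z : ℂ} (hz : z ∈ ball s (r / 2)) : closedBall z (r / 2) ⊆ U ∩ V :=
    (closedBall_subset_closedBall' (by linarith [mem_ball.1 hz])).trans hball
  have hderiv (a : α) {z : ℂ} (hz : z ∈ ball s (r / 2)) :
      HasDerivAt (f · a) (deriv (f · a) z) z :=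
    ((hf a).differentiableAt
      (hU.mem_nhds (hsub hz (mem_closedBall_self (by positivity))).1)).hasDerivAt
  refine (hasDerivAt_integral_of_dominated_loc_of_deriv_le (ball_mem_nhds s (half_pos hr))
    (F' := fun z a => deriv (f · a) z) (bound := fun a => b a / (r / 2)) (.of_forall hmeas)
    (hb.mono' (hmeas s) (.of_forall (hle s (mem_of_mem_nhds hV)))) ?_ ?_ (hb.div_const _)
    (.of_forall fun a z hz => hderiv a hz)).2.differentiableAt.differentiableWithinAt
  · refine aestronglyMeasurable_of_tendsto_ae (𝓝[≠] s) (f := fun z a => slope (f · a) s z)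
      (fun z => ((hmeas z).sub (hmeas s)).const_smul _) (.of_forall fun a => ?_)
    exact (hderiv a (mem_ball_self (half_pos hr))).tendsto_slope
  · refine .of_forall fun a z hz => ?_
    refine Complex.norm_deriv_le_of_forall_mem_sphere_norm_le (half_pos hr)
      (((hf a).mono (closure_ball_subset_closedBall.trans
        ((hsub hz).trans inter_subset_left))).diffContOnCl) fun w hw => ?_
    exact hle w (hsub hz (sphere_subset_closedBall hw)).2 a

lemma integral_abs_det_mul_exp_neg_half_norm_sq_add {V : Type*} [NormedAddCommGroup V]
    [InnerProductSpace ℝ V] [FiniteDimensional ℝ V] [MeasurableSpace V] [BorelSpace V]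
    {f : V → V} {f' : V → V →L[ℝ] V} {c : ℝ≥0} (hc : c < 1)
    (hf : ∀ x, HasFDerivAt f (f' x) x) (hf' : ∀ x, ‖f' x‖₊ ≤ c) :
    ∫ x, |(1 + f' x).det| * Real.exp (-(1 / 2) * ‖x + f x‖ ^ 2) =
      √((2 * Real.pi) ^ finrank ℝ V) := by
  have happrox : ApproximatesLinearOn (fun x => x + f x)
      (ContinuousLinearEquiv.refl ℝ V : V →L[ℝ] V) univ c := by
    refine ApproximatesLinearOn.approximatesLinearOn_iff_lipschitzOnWith.2 ?_
    convert (lipschitzWith_of_nnnorm_fderiv_le (fun x => (hf x).differentiableAt)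
      fun x => (hf x).fderiv.symm ▸ hf' x).lipschitzOnWith (s := univ) using 1
    ext x
    simp
  have hcinv : Subsingleton V ∨
      c < ‖((ContinuousLinearEquiv.refl ℝ V).symm : V →L[ℝ] V)‖₊⁻¹ := by
    rcases subsingleton_or_nontrivial V with h | h
    · exact .inl h
    · exact .inr (by simpa using hc)
  have hderiv (x : V) : HasFDerivWithinAt (fun x => x + f x) (.id ℝ V + f' x) univ x :=
    ((hasFDerivAt_id x).add (hf x)).hasFDerivWithinAt
  calc ∫ x, |(1 + f' x).det| * Real.exp (-(1 / 2) * ‖x + f x‖ ^ 2)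
      = ∫ x in univ, |(.id ℝ V + f' x).det| • Real.exp (-(1 / 2) * ‖x + f x‖ ^ 2) := by
        rw [setIntegral_univ]; rfl
    _ = ∫ y in (fun x => x + f x) '' univ, Real.exp (-(1 / 2) * ‖y‖ ^ 2) :=
        (integral_image_eq_integral_abs_det_fderiv_smul volume .univ (fun x _ => hderiv x)
          (happrox.injOn hcinv) fun y => Real.exp (-(1 / 2) * ‖y‖ ^ 2)).symm
    _ = _ := by
        rw [image_univ, (happrox.surjective hcinv).range_eq, setIntegral_univ,
          integral_exp_neg_half_norm_sq]

section DeformedNorm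

variable {V : Type*} [NormedAddCommGroup V] [InnerProductSpace ℝ V]

/-- The extension to complex `s` of `‖p + s (s + J) (p - g) / 2‖²`, expanded for an orthogonal
complex structure `J`. At `s = I` it reduces to `⟪p, g⟫ - I ⟪p, J g⟫`. -/
def deformedNormSq (J : V →L[ℝ] V) (p g : V) (s : ℂ) : ℂ :=
  (1 + s ^ 2) * (1 + s ^ 2 / 4) * (‖p‖ ^ 2 : ℝ) - s ^ 2 * (s ^ 2 + 3) / 2 * (⟪p, g⟫ : ℝ) -
    s * (⟪p, J g⟫ : ℝ) + s ^ 2 * (s ^ 2 + 1) / 4 * (‖g‖ ^ 2 : ℝ)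

lemma differentiable_deformedNormSq (J : V →L[ℝ] V) (p g : V) :
    Differentiable ℂ (deformedNormSq J p g) := by
  unfold deformedNormSq
  fun_prop

variable {J : V →L[ℝ] V} (hJ : ∀ v, ⟪v, J v⟫ = 0) (hJJ : ∀ v, J (J v) = -v)
include hJ hJJ

lemma norm_apply_of_orthogonal_complexStructure (v : V) : ‖J v‖ = ‖v‖ := by
  have h := hJ (v + J v)
  simp only [map_add, hJJ, inner_add_left, inner_add_right, inner_neg_right, hJ] at h
  rw [real_inner_self_eq_norm_sq, real_inner_self_eq_norm_sq, real_inner_comm, hJ] at h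
  exact (sq_eq_sq₀ (norm_nonneg _) (norm_nonneg _)).1 (by linarith)

lemma deformedNormSq_ofReal (p g : V) (s : ℝ) :
    deformedNormSq J p g s = (‖p + (s • (s • 1 + J)) ((2⁻¹ : ℝ) • (p - g))‖ ^ 2 : ℝ) := by
  set e := (2⁻¹ : ℝ) • (p - g) with he
  have hg : g = p - (2 : ℝ) • e := by simp [he, smul_smul]
  have hnorm := norm_apply_of_orthogonal_complexStructure hJ hJJ e
  have hsq : ‖s • e + J e‖ ^ 2 = s ^ 2 * ‖e‖ ^ 2 + ‖e‖ ^ 2 := by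
    rw [norm_add_sq_real, real_inner_smul_left, hJ, hnorm, norm_smul, mul_pow, Real.norm_eq_abs,
      sq_abs]
    ring
  have happly : (s • (s • 1 + J)) e = s • (s • e + J e) := rfl
  have hgsq : ‖g‖ ^ 2 = ‖p‖ ^ 2 - 4 * ⟪p, e⟫ + 4 * ‖e‖ ^ 2 := by
    rw [hg, norm_sub_sq_real, norm_smul, mul_pow, Real.norm_eq_abs, sq_abs, real_inner_smul_right]
    ring
  have hpg : ⟪p, g⟫ = ‖p‖ ^ 2 - 2 * ⟪p, e⟫ := by
    rw [hg, inner_sub_right, real_inner_smul_right, real_inner_self_eq_norm_sq]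
  have hpJg : ⟪p, J g⟫ = -2 * ⟪p, J e⟫ := by
    rw [hg, map_sub, map_smul, inner_sub_right, real_inner_smul_right, hJ]
    ring
  rw [happly, norm_add_sq_real, norm_smul, mul_pow, Real.norm_eq_abs, sq_abs, hsq,
    real_inner_smul_right, inner_add_right, real_inner_smul_right, deformedNormSq, hgsq, hpg, hpJg]
  push_cast
  ring

lemma re_deformedNormSq_ge (p g : V) {s : ℂ} (hs : ‖s‖ ≤ 1) :
    3 / 4 * (1 - ‖s‖ ^ 2) * ‖p‖ ^ 2 - 3 * ‖p‖ * ‖g‖ - ‖g‖ ^ 2 / 2 ≤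
      (deformedNormSq J p g s).re := by
  set m := ‖s ^ 2‖ with hm
  have hm1 : m ≤ 1 := by simpa only [hm, norm_pow] using pow_le_one₀ (norm_nonneg s) hs
  have hm0 : 0 ≤ m := norm_nonneg _
  have hmain : 3 / 4 * (1 - m) ≤ ((1 + s ^ 2) * (1 + s ^ 2 / 4)).re := by
    have hre : ((1 + s ^ 2) * (1 + s ^ 2 / 4)).re =
        1 + 5 / 4 * (s ^ 2).re + ((s ^ 2).re ^ 2 - (m ^ 2 - (s ^ 2).re ^ 2)) / 4 := by
      have := Complex.sq_norm (s ^ 2)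
      rw [← hm, Complex.normSq_apply] at this
      rw [this]
      simp only [Complex.mul_re, Complex.add_re, Complex.one_re, Complex.div_ofNat_re,
        Complex.add_im, Complex.one_im, Complex.div_ofNat_im]
      ring
    have habs := abs_le.1 (Complex.abs_re_le_norm (s ^ 2))
    rw [hre]
    nlinarith [habs.1, habs.2]
  have hre_le {z : ℂ} {c x y : ℝ} (hz : ‖z‖ ≤ c) (hx : |x| ≤ y) : |(z * (x : ℂ)).re| ≤ c * y := by
    refine (Complex.abs_re_le_norm _).trans ?_
    rw [norm_mul, Complex.norm_real, Real.norm_eq_abs]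
    exact mul_le_mul hz hx (abs_nonneg _) ((norm_nonneg z).trans hz)
  have hquad : ‖s ^ 2 * (s ^ 2 + 3) / 2‖ ≤ 2 := by
    have : ‖s ^ 2 + 3‖ ≤ m + 3 := by simpa using norm_add_le (s ^ 2) 3
    rw [norm_div, norm_mul, Complex.norm_ofNat, ← hm]
    nlinarith
  have hquart : ‖s ^ 2 * (s ^ 2 + 1) / 4‖ ≤ 1 / 2 := by
    have : ‖s ^ 2 + 1‖ ≤ m + 1 := by simpa using norm_add_le (s ^ 2) 1
    rw [norm_div, norm_mul, Complex.norm_ofNat, ← hm]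
    nlinarith
  have hJg : |⟪p, J g⟫| ≤ ‖p‖ * ‖g‖ := by
    simpa only [norm_apply_of_orthogonal_complexStructure hJ hJJ] using
      abs_real_inner_le_norm p (J g)
  have hB := abs_le.1 (hre_le hquad (abs_real_inner_le_norm p g))
  have hC := abs_le.1 (hre_le hs hJg)
  have hD := abs_le.1 (hre_le hquart (abs_of_nonneg (sq_nonneg ‖g‖)).le)
  have hA := mul_le_mul_of_nonneg_right hmain (sq_nonneg ‖p‖)
  rw [deformedNormSq, Complex.add_re, Complex.sub_re, Complex.sub_re, Complex.re_mul_ofReal,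
    ← norm_pow, ← hm]
  linarith [hB.2, hC.2, hD.1]

omit hJ hJJ in
lemma re_deformedNormSq_mul_I (p g : V) (t : ℝ) :
    (deformedNormSq J p g (t * Complex.I)).re = (1 - t ^ 2) * (1 - t ^ 2 / 4) * ‖p‖ ^ 2 +
      t ^ 2 * (3 - t ^ 2) / 2 * ⟪p, g⟫ - t ^ 2 * (1 - t ^ 2) / 4 * ‖g‖ ^ 2 := by
  have hsq : ((t : ℂ) * Complex.I) ^ 2 = ((-t ^ 2 : ℝ) : ℂ) := by
    rw [mul_pow, Complex.I_sq]; push_cast; ring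
  have hlin : ((t : ℂ) * Complex.I * (⟪p, J g⟫ : ℝ)).re = 0 := by simp
  rw [deformedNormSq, hsq, Complex.add_re, Complex.sub_re, hlin]
  norm_cast
  ring

omit hJ hJJ in
lemma le_re_deformedNormSq_mul_I {p g : V} {δ C R t : ℝ} (hδ : 0 ≤ δ) (hC : 0 ≤ C)
    (hpg : δ * ‖p‖ - C ≤ ⟪p, g⟫) (hg : ‖g‖ ≤ R) (ht : t ∈ Icc (1 / 2) 1) :
    δ / 4 * ‖p‖ - (C + R ^ 2) ≤ (deformedNormSq J p g (t * Complex.I)).re := by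
  have ht2 : 1 / 4 ≤ t ^ 2 := by nlinarith [ht.1]
  have ht2' : t ^ 2 ≤ 1 := by nlinarith [ht.1, ht.2]
  have hquad : 0 ≤ (1 - t ^ 2) * (1 - t ^ 2 / 4) * ‖p‖ ^ 2 := by
    refine mul_nonneg (mul_nonneg ?_ ?_) (sq_nonneg _) <;> linarith
  have hcross : δ / 4 * ‖p‖ - C ≤ t ^ 2 * (3 - t ^ 2) / 2 * ⟪p, g⟫ := by
    have hge : 1 / 4 ≤ t ^ 2 * (3 - t ^ 2) / 2 := by nlinarith
    have hle : t ^ 2 * (3 - t ^ 2) / 2 ≤ 1 := by nlinarith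
    nlinarith [mul_nonneg hδ (norm_nonneg p)]
  have hsq : t ^ 2 * (1 - t ^ 2) / 4 * ‖g‖ ^ 2 ≤ 1 * R ^ 2 := by
    gcongr
    nlinarith
  rw [re_deformedNormSq_mul_I]
  linarith

end DeformedNorm

variable {ι : Type*} [Fintype ι] [DecidableEq ι]

/-- The complexification of the matrix of an operator on `ℝ^ι`. -/
def complexMatrix : (EuclideanSpace ℝ ι →L[ℝ] EuclideanSpace ℝ ι) →ₐ[ℝ] Matrix ι ι ℂ :=
  Complex.ofRealAm.mapMatrix.comp
    (Matrix.toEuclideanCLM (n := ι) (𝕜 := ℝ)).symm.toAlgEquiv.toAlgHom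

lemma complexMatrix_toEuclideanCLM (A : Matrix ι ι ℝ) :
    complexMatrix (Matrix.toEuclideanCLM (𝕜 := ℝ) A) = A.map Complex.ofReal := by
  simp [complexMatrix]

lemma det_toEuclideanCLM (A : Matrix ι ι ℝ) : (Matrix.toEuclideanCLM (𝕜 := ℝ) A).det = A.det := by
  rw [ContinuousLinearMap.det, Matrix.coe_toEuclideanCLM_eq_toEuclideanLin,
    Matrix.toEuclideanLin, Matrix.toLpLin_eq_toLin, LinearMap.det_toLin]

lemma det_complexMatrix (T : EuclideanSpace ℝ ι →L[ℝ] EuclideanSpace ℝ ι) :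
    (complexMatrix T).det = (T.det : ℂ) := by
  obtain ⟨A, rfl⟩ := (Matrix.toEuclideanCLM (𝕜 := ℝ)).surjective T
  change (complexMatrix (Matrix.toEuclideanCLM (𝕜 := ℝ) A)).det =
    ((Matrix.toEuclideanCLM (𝕜 := ℝ) A).det : ℂ)
  rw [complexMatrix_toEuclideanCLM, det_toEuclideanCLM]
  exact (Complex.ofRealHom.map_det A).symm

lemma continuous_complexMatrix :
    Continuous (complexMatrix (ι := ι)) :=
  LinearMap.continuous_of_finiteDimensional (complexMatrix (ι := ι)).toLinearMap

/-- The Jacobian determinant of `p ↦ p + s (s + J) e(p)` in terms of the derivative `E` of `e`,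
extended to complex `s`. -/
def deformedDet (J E : EuclideanSpace ℝ ι →L[ℝ] EuclideanSpace ℝ ι) (s : ℂ) : ℂ :=
  (1 + s • (s • 1 + complexMatrix J) * complexMatrix E).det

lemma deformedDet_ofReal (J E : EuclideanSpace ℝ ι →L[ℝ] EuclideanSpace ℝ ι) (s : ℝ) :
    deformedDet J E s = ((1 + s • (s • 1 + J) * E).det : ℂ) := by
  rw [← det_complexMatrix, map_add, map_mul, map_smul, map_add, map_smul, map_one]
  rfl

lemma continuous_deformedDet (J : EuclideanSpace ℝ ι →L[ℝ] EuclideanSpace ℝ ι) :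
    Continuous fun q : (EuclideanSpace ℝ ι →L[ℝ] EuclideanSpace ℝ ι) × ℂ =>
      deformedDet J q.1 q.2 := by
  have := continuous_complexMatrix (ι := ι)
  unfold deformedDet
  fun_prop

lemma differentiable_deformedDet (J E : EuclideanSpace ℝ ι →L[ℝ] EuclideanSpace ℝ ι) :
    Differentiable ℂ (deformedDet J E) := by
  unfold deformedDet
  simp only [Matrix.det_apply', Matrix.add_apply, Matrix.smul_apply, Matrix.mul_apply, smul_eq_mul]
  fun_prop

lemma exists_norm_deformedDet_le (J : EuclideanSpace ℝ ι →L[ℝ] EuclideanSpace ℝ ι) (B : ℝ) :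
    ∃ C, ∀ E s, ‖E‖ ≤ B → ‖s‖ ≤ 1 → ‖deformedDet J E s‖ ≤ C := by
  obtain ⟨C, hC⟩ := ((isCompact_closedBall 0 B).prod (isCompact_closedBall (0 : ℂ) 1)
    |>.exists_bound_of_continuousOn (continuous_deformedDet J).continuousOn)
  exact ⟨C, fun E s hE hs => hC (E, s) (by simp [hE, hs])⟩

end ComplexDeformation

section DeformedGaussian

lemma integrable_exp_neg_mul_norm {V : Type*} [NormedAddCommGroup V] [InnerProductSpace ℝ V]
    [FiniteDimensional ℝ V] [MeasurableSpace V] [BorelSpace V] {κ : ℝ} (hκ : 0 < κ) :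
    Integrable fun x : V => Real.exp (-(κ * ‖x‖)) := by
  set k := finrank ℝ V + 1
  have hk : Integrable fun x : V => (1 + ‖x‖) ^ (-(k : ℝ)) :=
    integrable_one_add_norm (by simp [k])
  refine (hk.const_mul (Real.exp κ * k.factorial / κ ^ k)).mono' (by fun_prop)
    (.of_forall fun x => ?_)
  have hpos : 0 < 1 + ‖x‖ := by positivity
  have hexp := Real.pow_div_factorial_le_exp (κ * (1 + ‖x‖)) (by positivity) k
  rw [Real.norm_of_nonneg (Real.exp_nonneg _), Real.rpow_neg hpos.le, Real.rpow_natCast]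
  rw [show -(κ * ‖x‖) = κ - κ * (1 + ‖x‖) by ring, Real.exp_sub, div_le_iff₀ (Real.exp_pos _)]
  calc Real.exp κ = Real.exp κ * k.factorial / κ ^ k * ((1 + ‖x‖) ^ k)⁻¹ *
        ((κ * (1 + ‖x‖)) ^ k / k.factorial) := by
        rw [mul_pow]; field_simp
    _ ≤ _ := by gcongr

lemma det_one_add_pos {V : Type*} [NormedAddCommGroup V]
    [InnerProductSpace ℝ V] [FiniteDimensional ℝ V] {T : V →L[ℝ] V} (hT : ‖T‖ < 1) :
    0 < (1 + T).det := by
  have hcont : Continuous fun t : ℝ => (1 + t • T).det :=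
    ContinuousLinearMap.continuous_det.comp (by fun_prop)
  have hne {t : ℝ} (ht : t ∈ Icc (0 : ℝ) 1) : (1 + t • T).det ≠ 0 := by
    have hunit : IsUnit (1 + t • T) := by
      have hlt : ‖-(t • T)‖ < 1 := by
        rw [norm_neg, norm_smul, Real.norm_of_nonneg ht.1]
        exact (mul_le_of_le_one_left (norm_nonneg T) ht.2).trans_lt hT
      simpa using isUnit_one_sub_of_norm_lt_one hlt
    exact ((hunit.map (ContinuousLinearMap.toLinearMapRingHom : (V →L[ℝ] V) →+* _)).map
      LinearMap.det).ne_zero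
  by_contra! hle
  obtain ⟨t, ht, hzero⟩ := intermediate_value_Icc' zero_le_one hcont.continuousOn
    (show (0 : ℝ) ∈ Icc _ _ from ⟨by simpa using hle, by simp [ContinuousLinearMap.det]⟩)
  exact hne ht hzero

variable {ι : Type*} [Fintype ι] [DecidableEq ι]

/-- The integrand of the analytic continuation in `s` of the integral of
`exp (-‖Φ p‖² / 2) det (Φ' p)` for `Φ p = p + s (s + J) (p - g p) / 2`, where `G` is the derivative
of `g`. -/
def deformedGaussian (J : EuclideanSpace ℝ ι →L[ℝ] EuclideanSpace ℝ ι)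
    (g : EuclideanSpace ℝ ι → EuclideanSpace ℝ ι)
    (G : EuclideanSpace ℝ ι → EuclideanSpace ℝ ι →L[ℝ] EuclideanSpace ℝ ι) (s : ℂ)
    (p : EuclideanSpace ℝ ι) : ℂ :=
  Complex.exp (-(1 / 2) * deformedNormSq J p (g p) s) * deformedDet J ((2⁻¹ : ℝ) • (1 - G p)) s

variable {J : EuclideanSpace ℝ ι →L[ℝ] EuclideanSpace ℝ ι}
  {g : EuclideanSpace ℝ ι → EuclideanSpace ℝ ι}
  {G : EuclideanSpace ℝ ι → EuclideanSpace ℝ ι →L[ℝ] EuclideanSpace ℝ ι} {B R : ℝ}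

lemma norm_deformedGaussian (s : ℂ) (p : EuclideanSpace ℝ ι) :
    ‖deformedGaussian J g G s p‖ = Real.exp (-(1 / 2) * (deformedNormSq J p (g p) s).re) *
      ‖deformedDet J ((2⁻¹ : ℝ) • (1 - G p)) s‖ := by
  rw [deformedGaussian, norm_mul, Complex.norm_exp]
  congr 2
  simp

lemma differentiable_deformedGaussian (p : EuclideanSpace ℝ ι) :
    Differentiable ℂ fun s => deformedGaussian J g G s p :=
  ((differentiable_deformedNormSq J p (g p)).const_mul _).cexp.mul (differentiable_deformedDet J _)

lemma aestronglyMeasurable_deformedGaussian (hg : ∀ p, HasFDerivAt g (G p) p) (s : ℂ) :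
    AEStronglyMeasurable (deformedGaussian J g G s) volume := by
  have hgc : Continuous g := continuous_iff_continuousAt.2 fun p => (hg p).continuousAt
  have hG : Measurable G := by
    rw [show G = fderiv ℝ g from funext fun p => (hg p).fderiv.symm]
    exact measurable_fderiv ℝ g
  have hexp : Continuous fun p => Complex.exp (-(1 / 2) * deformedNormSq J p (g p) s) := by
    unfold deformedNormSq
    fun_prop
  have hdet : Continuous fun E => deformedDet J ((2⁻¹ : ℝ) • (1 - E)) s := by
    have := continuous_deformedDet J
    fun_prop
  exact (hexp.measurable.mul (hdet.measurable.comp hG)).aestronglyMeasurable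

omit [DecidableEq ι] in
lemma norm_half_one_sub_le {T : EuclideanSpace ℝ ι →L[ℝ] EuclideanSpace ℝ ι} (hT : ‖T‖ ≤ B) :
    ‖(2⁻¹ : ℝ) • (1 - T)‖ ≤ 2⁻¹ * (1 + B) := by
  rw [norm_smul, Real.norm_of_nonneg (by norm_num)]
  gcongr
  exact (norm_sub_le _ _).trans (add_le_add ContinuousLinearMap.norm_id_le hT)

lemma exists_norm_deformedGaussian_le (J : EuclideanSpace ℝ ι →L[ℝ] EuclideanSpace ℝ ι)
    (hGB : ∀ p, ‖G p‖ ≤ B) :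
    ∃ D, ∀ s p, ‖s‖ ≤ 1 → ‖deformedGaussian J g G s p‖ ≤
      D * Real.exp (-(1 / 2) * (deformedNormSq J p (g p) s).re) := by
  obtain ⟨D, hD⟩ := exists_norm_deformedDet_le J (2⁻¹ * (1 + B))
  refine ⟨D, fun s p hs => ?_⟩
  rw [norm_deformedGaussian, mul_comm]
  gcongr
  exact hD _ s (norm_half_one_sub_le (hGB p)) hs

variable (hJ : ∀ v, ⟪v, J v⟫ = 0) (hJJ : ∀ v, J (J v) = -v) (hg : ∀ p, HasFDerivAt g (G p) p)
  (hGB : ∀ p, ‖G p‖ ≤ B) (hgR : ∀ p, ‖g p‖ ≤ R)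
include hJ hJJ hg hGB hgR

omit hg in
lemma exists_integrable_norm_deformedGaussian_le {ρ : ℝ} (hρ : 0 ≤ ρ) (hρ1 : ρ < 1) :
    ∃ b : EuclideanSpace ℝ ι → ℝ, Integrable b ∧ ∀ s ∈ closedBall (0 : ℂ) ρ, ∀ p,
      ‖deformedGaussian J g G s p‖ ≤ b p := by
  obtain ⟨D, hD⟩ := exists_norm_deformedGaussian_le (g := g) J hGB
  set κ := 3 / 4 * (1 - ρ ^ 2) with hκ
  have hκ0 : 0 < κ := by rw [hκ]; nlinarith
  set C := (3 * R + 1) ^ 2 / (4 * κ) + R ^ 2 / 2 with hC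
  refine ⟨fun p => |D| * Real.exp (C / 2) * Real.exp (-(1 / 2 * ‖p‖)),
    (integrable_exp_neg_mul_norm (by norm_num)).const_mul _, fun s hs p => ?_⟩
  have hs' : ‖s‖ ≤ ρ := by simpa using hs
  have hs2 : ‖s‖ ^ 2 ≤ ρ ^ 2 := by gcongr
  have hre : ‖p‖ - C ≤ (deformedNormSq J p (g p) s).re := by
    refine le_trans ?_ (re_deformedNormSq_ge hJ hJJ p (g p) (hs'.trans hρ1.le))
    have hcross : ‖p‖ * ‖g p‖ ≤ ‖p‖ * R := by gcongr; exact hgR p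
    have hgsq : ‖g p‖ ^ 2 ≤ R ^ 2 := by gcongr; exact hgR p
    have hcoef : κ * ‖p‖ ^ 2 ≤ 3 / 4 * (1 - ‖s‖ ^ 2) * ‖p‖ ^ 2 := by rw [hκ]; gcongr
    have hsquare : 0 ≤ κ * ‖p‖ ^ 2 - (3 * R + 1) * ‖p‖ + (3 * R + 1) ^ 2 / (4 * κ) := by
      have : κ * ‖p‖ ^ 2 - (3 * R + 1) * ‖p‖ + (3 * R + 1) ^ 2 / (4 * κ) =
          (2 * κ * ‖p‖ - (3 * R + 1)) ^ 2 / (4 * κ) := by field_simp; ring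
      rw [this]
      positivity
    linarith
  refine (hD s p (hs'.trans hρ1.le)).trans ?_
  simp only [mul_assoc, ← Real.exp_add]
  gcongr
  · exact le_abs_self D
  · linarith

omit hgR in
lemma integral_deformedGaussian_ofReal {s : ℝ} (hs : |s| * (|s| + ‖J‖) * (1 + B) < 1) :
    ∫ p, deformedGaussian J g G s p = √((2 * Real.pi) ^ Fintype.card ι) := by
  set E : EuclideanSpace ℝ ι → EuclideanSpace ℝ ι →L[ℝ] EuclideanSpace ℝ ι :=
    fun p => (s • (s • 1 + J)) * ((2⁻¹ : ℝ) • (1 - G p))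
  have hB : 0 ≤ B := (norm_nonneg _).trans (hGB 0)
  set c : ℝ≥0 := ⟨|s| * (|s| + ‖J‖) * (1 + B), by positivity⟩
  have hEc (p : EuclideanSpace ℝ ι) : ‖E p‖ ≤ c := by
    have hsJ : ‖s • (1 : EuclideanSpace ℝ ι →L[ℝ] EuclideanSpace ℝ ι) + J‖ ≤ |s| + ‖J‖ := by
      refine (norm_add_le _ _).trans (add_le_add_left ?_ _)
      rw [norm_smul, Real.norm_eq_abs]
      exact mul_le_of_le_one_right (abs_nonneg s) ContinuousLinearMap.norm_id_le
    calc ‖E p‖ ≤ ‖s • (s • 1 + J)‖ * ‖(2⁻¹ : ℝ) • (1 - G p)‖ := norm_mul_le _ _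
      _ ≤ |s| * (|s| + ‖J‖) * (2⁻¹ * (1 + B)) := by
          rw [norm_smul, Real.norm_eq_abs]
          gcongr
          exact norm_half_one_sub_le (hGB p)
      _ ≤ |s| * (|s| + ‖J‖) * (1 + B) := by gcongr; linarith
  have hderiv (p : EuclideanSpace ℝ ι) :
      HasFDerivAt (fun p => (s • (s • 1 + J)) ((2⁻¹ : ℝ) • (p - g p))) (E p) p :=
    (s • (s • 1 + J)).hasFDerivAt.comp p (((hasFDerivAt_id p).sub (hg p)).const_smul (2⁻¹ : ℝ))
  rw [← finrank_euclideanSpace (𝕜 := ℝ), ← integral_abs_det_mul_exp_neg_half_norm_sq_add (c := c)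
    (NNReal.coe_lt_coe.1 hs) hderiv hEc, ← integral_complex_ofReal]
  refine integral_congr_ae (.of_forall fun p => ?_)
  have hpos : 0 < (1 + E p).det := det_one_add_pos ((hEc p).trans_lt hs)
  simp only [deformedGaussian, deformedDet_ofReal, deformedNormSq_ofReal hJ hJJ, abs_of_pos hpos]
  push_cast
  rw [mul_comm]

lemma integral_deformedGaussian_eq {s : ℂ} (hs : s ∈ ball (0 : ℂ) 1) :
    ∫ p, deformedGaussian J g G s p = √((2 * Real.pi) ^ Fintype.card ι) := by
  have hdiff : DifferentiableOn ℂ (fun s => ∫ p, deformedGaussian J g G s p) (ball 0 1) := by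
    refine differentiableOn_integral_of_locally_dominated isOpen_ball
      (aestronglyMeasurable_deformedGaussian hg)
      (fun p => (differentiable_deformedGaussian p).differentiableOn) fun s hs => ?_
    obtain ⟨ρ, hsρ, hρ1⟩ := exists_between (mem_ball_zero_iff.1 hs)
    obtain ⟨b, hb, hle⟩ := exists_integrable_norm_deformedGaussian_le hJ hJJ hGB hgR
      ((norm_nonneg s).trans hsρ.le) hρ1
    exact ⟨closedBall 0 ρ, closedBall_mem_nhds_of_mem (mem_ball_zero_iff.2 hsρ), b, hb, hle⟩
  have hsmall : ∀ᶠ s : ℝ in 𝓝 0, |s| * (|s| + ‖J‖) * (1 + B) < 1 :=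
    (by fun_prop : Continuous fun s : ℝ => |s| * (|s| + ‖J‖) * (1 + B)).continuousAt.eventually_lt
      continuousAt_const (by simp)
  have hfreq : ∃ᶠ s in 𝓝[≠] (0 : ℂ), ∫ p, deformedGaussian J g G s p =
      √((2 * Real.pi) ^ Fintype.card ι) := by
    have hreal : Tendsto ((↑) : ℝ → ℂ) (𝓝[≠] 0) (𝓝[≠] (0 : ℂ)) :=
      tendsto_nhdsWithin_iff.2 ⟨
        (Complex.continuous_ofReal.tendsto' 0 0 rfl).mono_left nhdsWithin_le_nhds,
        by filter_upwards [self_mem_nhdsWithin] with s hs using by simpa using hs⟩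
    refine hreal.frequently (Eventually.frequently ?_)
    filter_upwards [hsmall.filter_mono nhdsWithin_le_nhds] with s hs
    exact integral_deformedGaussian_ofReal hJ hJJ hg hGB hs
  exact (hdiff.analyticOnNhd isOpen_ball).eqOn_of_preconnected_of_frequently_eq
    analyticOnNhd_const (convex_ball 0 1).isPreconnected (mem_ball_self one_pos) hfreq hs

lemma integral_deformedGaussian_I {δ C : ℝ} (hδ : 0 < δ)
    (hcoer : ∀ p, δ * ‖p‖ - C ≤ ⟪p, g p⟫) :
    ∫ p, deformedGaussian J g G Complex.I p = √((2 * Real.pi) ^ Fintype.card ι) := by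
  obtain ⟨D, hD⟩ := exists_norm_deformedGaussian_le (g := g) J hGB
  have hD0 : 0 ≤ D := nonneg_of_mul_nonneg_left
    ((norm_nonneg _).trans (hD 0 0 (by simp))) (Real.exp_pos _)
  have hC : 0 ≤ C := by simpa using hcoer 0
  have hpath : Tendsto (fun t : ℝ => (t : ℂ) * Complex.I) (𝓝[<] 1) (𝓝 Complex.I) :=
    ((by fun_prop : Continuous fun t : ℝ => (t : ℂ) * Complex.I).tendsto' 1 _ (by simp)).mono_left
      nhdsWithin_le_nhds
  have hmem : ∀ᶠ t : ℝ in 𝓝[<] 1, t ∈ Ioo (1 / 2 : ℝ) 1 := Ioo_mem_nhdsLT (by norm_num)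
  have hlim := tendsto_integral_filter_of_dominated_convergence
    (F := fun (t : ℝ) p => deformedGaussian J g G (t * Complex.I) p)
    (fun p => D * (Real.exp ((C + R ^ 2) / 2) * Real.exp (-(δ / 8 * ‖p‖))))
    (.of_forall fun t => aestronglyMeasurable_deformedGaussian hg _)
    (hmem.mono fun t ht => .of_forall fun p => (hD _ p (by
      simpa [abs_of_pos (one_half_pos.trans ht.1)] using ht.2.le)).trans (by
        rw [← Real.exp_add]
        gcongr
        linarith [le_re_deformedNormSq_mul_I (J := J) hδ.le hC (hcoer p) (hgR p)
          ⟨ht.1.le, ht.2.le⟩]))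
    (((integrable_exp_neg_mul_norm (by positivity)).const_mul _).const_mul _)
    (.of_forall fun p => ((differentiable_deformedGaussian p).continuous.tendsto _).comp hpath)
  refine tendsto_nhds_unique hlim (tendsto_const_nhds.congr' (hmem.mono fun t ht => ?_))
  refine (integral_deformedGaussian_eq hJ hJJ hg hGB hgR (mem_ball_zero_iff.2 ?_)).symm
  simpa [abs_of_pos (one_half_pos.trans ht.1)] using ht.2

lemma ofReal_sqrt_le_lintegral_deformedDet_I {δ C : ℝ} (hδ : 0 < δ)
    (hcoer : ∀ p, δ * ‖p‖ - C ≤ ⟪p, g p⟫) :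
    ENNReal.ofReal √((2 * Real.pi) ^ Fintype.card ι) ≤
      ∫⁻ p, ENNReal.ofReal (Real.exp (-(1 / 2) * ⟪p, g p⟫)) *
        ‖deformedDet J ((2⁻¹ : ℝ) • (1 - G p)) Complex.I‖ₑ := by
  calc ENNReal.ofReal √((2 * Real.pi) ^ Fintype.card ι)
      = ‖∫ p, deformedGaussian J g G Complex.I p‖ₑ := by
        rw [integral_deformedGaussian_I hJ hJJ hg hGB hgR hδ hcoer, ← ofReal_norm,
          Complex.norm_real, Real.norm_of_nonneg (Real.sqrt_nonneg _)]
    _ ≤ ∫⁻ p, ‖deformedGaussian J g G Complex.I p‖ₑ := enorm_integral_le_lintegral_enorm _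
    _ = _ := by
        refine lintegral_congr fun p => ?_
        have hre : (deformedNormSq J p (g p) Complex.I).re = ⟪p, g p⟫ := by
          have := re_deformedNormSq_mul_I (J := J) p (g p) 1
          norm_num at this
          exact this
        rw [← ofReal_norm, norm_deformedGaussian, hre, ENNReal.ofReal_mul (Real.exp_nonneg _),
          ofReal_norm]

end DeformedGaussian

section Doubling

open EuclideanSpace (sumEquivProd)

variable {ι : Type*} [Fintype ι]

lemma inner_sumEquivProd (p q : EuclideanSpace ℝ (ι ⊕ ι)) :
    ⟪p, q⟫ = ⟪(sumEquivProd p).1, (sumEquivProd q).1⟫ +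
      ⟪(sumEquivProd p).2, (sumEquivProd q).2⟫ := by
  simp only [PiLp.inner_apply, Fintype.sum_sum_type]
  rfl

lemma norm_sq_sumEquivProd (p : EuclideanSpace ℝ (ι ⊕ ι)) :
    ‖p‖ ^ 2 = ‖(sumEquivProd p).1‖ ^ 2 +
      ‖(sumEquivProd p).2‖ ^ 2 := by
  simp only [← real_inner_self_eq_norm_sq, inner_sumEquivProd p p]

lemma measurePreserving_sumEquivProd :
    MeasurePreserving (sumEquivProd (𝕜 := ℝ) (ι := ι) (κ := ι)) :=
  (WithLp.volume_preserving_ofLp _ _).comp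
    (PiLp.sumPiLpEquivProdLpPiLp 2 fun _ : ι ⊕ ι => ℝ).measurePreserving

/-- The map acting by `m` on each half of the double of a Euclidean space. -/
def doubleMap (m : EuclideanSpace ℝ ι → EuclideanSpace ℝ ι) (p : EuclideanSpace ℝ (ι ⊕ ι)) :
    EuclideanSpace ℝ (ι ⊕ ι) :=
  sumEquivProd.symm (m (sumEquivProd p).1, m (sumEquivProd p).2)

lemma inner_doubleMap (m : EuclideanSpace ℝ ι → EuclideanSpace ℝ ι)
    (p : EuclideanSpace ℝ (ι ⊕ ι)) :
    ⟪p, doubleMap m p⟫ =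
      ⟪(sumEquivProd p).1, m (sumEquivProd p).1⟫ + ⟪(sumEquivProd p).2, m (sumEquivProd p).2⟫ := by
  rw [inner_sumEquivProd, doubleMap, ContinuousLinearEquiv.apply_symm_apply]

variable [DecidableEq ι]

lemma sumEquivProd_toEuclideanCLM_fromBlocks (A B C D : Matrix ι ι ℝ)
    (p : EuclideanSpace ℝ (ι ⊕ ι)) :
    sumEquivProd (Matrix.toEuclideanCLM (𝕜 := ℝ) (.fromBlocks A B C D) p) =
      (Matrix.toEuclideanCLM (𝕜 := ℝ) A (sumEquivProd p).1 +
        Matrix.toEuclideanCLM (𝕜 := ℝ) B (sumEquivProd p).2,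
       Matrix.toEuclideanCLM (𝕜 := ℝ) C (sumEquivProd p).1 +
        Matrix.toEuclideanCLM (𝕜 := ℝ) D (sumEquivProd p).2) := by
  have hmul := (Matrix.ofLp_toEuclideanCLM (𝕜 := ℝ) (.fromBlocks A B C D) p).trans
    (Matrix.fromBlocks_mulVec A B C D p.ofLp)
  ext i
  · exact congrFun hmul (.inl i)
  · exact congrFun hmul (.inr i)

/-- The complex structure `(x, y) ↦ (y, -x)` on the double of a Euclidean space. -/
def doubleJ (ι : Type*) [Fintype ι] [DecidableEq ι] :
    EuclideanSpace ℝ (ι ⊕ ι) →L[ℝ] EuclideanSpace ℝ (ι ⊕ ι) :=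
  Matrix.toEuclideanCLM (𝕜 := ℝ) (.fromBlocks 0 1 (-1) 0)

lemma sumEquivProd_doubleJ (p : EuclideanSpace ℝ (ι ⊕ ι)) :
    sumEquivProd (doubleJ ι p) = ((sumEquivProd p).2, -(sumEquivProd p).1) := by
  rw [doubleJ, sumEquivProd_toEuclideanCLM_fromBlocks]
  simp only [map_zero, map_one, map_neg, zero_apply, neg_apply, zero_add, add_zero]
  rfl

lemma inner_doubleJ_self (p : EuclideanSpace ℝ (ι ⊕ ι)) : ⟪p, doubleJ ι p⟫ = 0 := by
  rw [inner_sumEquivProd, sumEquivProd_doubleJ, inner_neg_right, real_inner_comm, add_neg_cancel]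

lemma doubleJ_doubleJ (p : EuclideanSpace ℝ (ι ⊕ ι)) : doubleJ ι (doubleJ ι p) = -p := by
  refine sumEquivProd.injective ?_
  rw [sumEquivProd_doubleJ, sumEquivProd_doubleJ, map_neg]
  rfl

/-- The block diagonal operator on the double of a Euclidean space. -/
def doubleDiag (S T : EuclideanSpace ℝ ι →L[ℝ] EuclideanSpace ℝ ι) :
    EuclideanSpace ℝ (ι ⊕ ι) →L[ℝ] EuclideanSpace ℝ (ι ⊕ ι) :=
  Matrix.toEuclideanCLM (𝕜 := ℝ) (.fromBlocks ((Matrix.toEuclideanCLM (𝕜 := ℝ)).symm S) 0 0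
    ((Matrix.toEuclideanCLM (𝕜 := ℝ)).symm T))

lemma sumEquivProd_doubleDiag (S T : EuclideanSpace ℝ ι →L[ℝ] EuclideanSpace ℝ ι)
    (p : EuclideanSpace ℝ (ι ⊕ ι)) :
    sumEquivProd (doubleDiag S T p) = (S (sumEquivProd p).1, T (sumEquivProd p).2) := by
  rw [doubleDiag, sumEquivProd_toEuclideanCLM_fromBlocks]
  simp only [map_zero, StarAlgEquiv.apply_symm_apply, zero_apply, zero_add, add_zero]

lemma norm_doubleDiag_le {S T : EuclideanSpace ℝ ι →L[ℝ] EuclideanSpace ℝ ι} {B : ℝ}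
    (hS : ‖S‖ ≤ B) (hT : ‖T‖ ≤ B) : ‖doubleDiag S T‖ ≤ B := by
  have hB : 0 ≤ B := (norm_nonneg S).trans hS
  refine ContinuousLinearMap.opNorm_le_bound _ hB fun p => ?_
  refine (sq_le_sq₀ (norm_nonneg _) (by positivity)).1 ?_
  rw [mul_pow, norm_sq_sumEquivProd, norm_sq_sumEquivProd p, sumEquivProd_doubleDiag, mul_add,
    ← mul_pow, ← mul_pow]
  gcongr
  · exact S.le_of_opNorm_le hS _
  · exact T.le_of_opNorm_le hT _

lemma det_one_add_I_smul_fromBlocks (A B : Matrix ι ι ℂ) :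
    (1 + Complex.I • (Complex.I • 1 + .fromBlocks 0 1 (-1) 0) *
      ((2⁻¹ : ℂ) • (1 - .fromBlocks A 0 0 B)) : Matrix (ι ⊕ ι) (ι ⊕ ι) ℂ).det =
      ((2⁻¹ : ℂ) • (A + B)).det := by
  set M : Matrix (ι ⊕ ι) (ι ⊕ ι) ℂ := 1 + Complex.I • (Complex.I • 1 + .fromBlocks 0 1 (-1) 0) *
    ((2⁻¹ : ℂ) • (1 - .fromBlocks A 0 0 B)) with hM
  have hI := Complex.I_mul_I
  have hfactor : M * .fromBlocks 1 (-Complex.I • 1) 0 1 =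
      .fromBlocks ((2⁻¹ : ℂ) • (1 + A)) (-Complex.I • 1) ((-Complex.I * 2⁻¹) • (1 - A)) 1 *
        .fromBlocks 1 0 0 ((2⁻¹ : ℂ) • (A + B)) := by
    have hMblocks : M = .fromBlocks ((2⁻¹ : ℂ) • (1 + A)) ((Complex.I * 2⁻¹) • (1 - B))
        ((-Complex.I * 2⁻¹) • (1 - A)) ((2⁻¹ : ℂ) • (1 + B)) := by
      have hone : (1 : Matrix (ι ⊕ ι) (ι ⊕ ι) ℂ) = .fromBlocks 1 0 0 1 :=
        Matrix.fromBlocks_one.symm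
      rw [hM, hone]
      simp only [Matrix.fromBlocks_smul, Matrix.fromBlocks_add, sub_eq_add_neg,
        Matrix.fromBlocks_neg, Matrix.fromBlocks_multiply, smul_zero, add_zero, zero_add, neg_zero,
        smul_mul_assoc, mul_smul_comm, one_mul, mul_zero, neg_mul]
      rw [Matrix.fromBlocks_inj]
      refine ⟨?_, ?_, ?_, ?_⟩ <;> match_scalars <;> ring_nf <;> norm_num [Complex.I_sq]
    rw [hMblocks, Matrix.fromBlocks_multiply, Matrix.fromBlocks_multiply, Matrix.fromBlocks_inj]
    simp only [mul_one, mul_zero, one_mul, add_zero, zero_add, mul_smul_comm,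
      smul_mul_assoc, true_and]
    refine ⟨?_, ?_⟩ <;> match_scalars <;> ring_nf <;> norm_num [Complex.I_sq]
  have hleft : ((2⁻¹ : ℂ) • (1 + A) - (-Complex.I • 1) * (-Complex.I * 2⁻¹) • (1 - A)) = 1 := by
    rw [smul_one_mul, smul_smul]
    match_scalars
    · linear_combination (-1 / 2) * hI
    · linear_combination (1 / 2) * hI
  have hdet := congrArg Matrix.det hfactor
  rw [Matrix.det_mul, Matrix.det_mul, Matrix.det_fromBlocks_zero₂₁, Matrix.det_fromBlocks_zero₂₁,
    Matrix.det_fromBlocks_one₂₂, hleft] at hdet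
  simpa using hdet

lemma deformedDet_doubleJ_I (S T : EuclideanSpace ℝ ι →L[ℝ] EuclideanSpace ℝ ι) :
    deformedDet (doubleJ ι) ((2⁻¹ : ℝ) • (1 - doubleDiag S T)) Complex.I =
      (((2⁻¹ : ℝ) • (S + T)).det : ℂ) := by
  have hS := complexMatrix_toEuclideanCLM ((Matrix.toEuclideanCLM (𝕜 := ℝ)).symm S)
  have hT := complexMatrix_toEuclideanCLM ((Matrix.toEuclideanCLM (𝕜 := ℝ)).symm T)
  rw [StarAlgEquiv.apply_symm_apply] at hS hT
  have hdiag : complexMatrix (doubleDiag S T) =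
      .fromBlocks (complexMatrix S) 0 0 (complexMatrix T) := by
    rw [doubleDiag, complexMatrix_toEuclideanCLM, Matrix.fromBlocks_map, hS, hT]
    simp
  have hJ : complexMatrix (doubleJ ι) = .fromBlocks 0 1 (-1) 0 := by
    rw [doubleJ, complexMatrix_toEuclideanCLM, Matrix.fromBlocks_map]
    simp [Matrix.map_neg]
  have hhalf (M : Matrix (ι ⊕ ι) (ι ⊕ ι) ℂ) : (2⁻¹ : ℝ) • M = (2⁻¹ : ℂ) • M := by
    rw [← Complex.coe_smul, Complex.ofReal_inv, Complex.ofReal_ofNat]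
  rw [deformedDet, hJ, map_smul, map_sub, map_one, hdiag, hhalf, det_one_add_I_smul_fromBlocks,
    ← det_complexMatrix, map_smul, map_add, ← Complex.coe_smul, Complex.ofReal_inv,
    Complex.ofReal_ofNat]

variable {m : EuclideanSpace ℝ ι → EuclideanSpace ℝ ι}
  {m' : EuclideanSpace ℝ ι → EuclideanSpace ℝ ι →L[ℝ] EuclideanSpace ℝ ι} {B R δ C : ℝ}

lemma hasFDerivAt_doubleMap (hm : ∀ x, HasFDerivAt m (m' x) x) (p : EuclideanSpace ℝ (ι ⊕ ι)) :
    HasFDerivAt (doubleMap m)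
      (doubleDiag (m' (sumEquivProd p).1) (m' (sumEquivProd p).2)) p := by
  have hsum := (sumEquivProd (𝕜 := ℝ) (ι := ι) (κ := ι)).hasFDerivAt (x := p)
  have hprod := ((hm (sumEquivProd p).1).comp p hsum.fst).prodMk
    ((hm (sumEquivProd p).2).comp p hsum.snd)
  refine (sumEquivProd.symm.hasFDerivAt.comp p hprod).congr_fderiv ?_
  ext1 v
  refine sumEquivProd.injective ?_
  rw [sumEquivProd_doubleDiag]
  simp

omit [DecidableEq ι] in
theorem two_pi_pow_le_lintegral_det_midpoint (hm : ∀ x, HasFDerivAt m (m' x) x)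
    (hB : ∀ x, ‖m' x‖ ≤ B) (hR : ∀ x, ‖m x‖ ≤ R) (hδ : 0 < δ)
    (hcoer : ∀ x, δ * ‖x‖ - C ≤ ⟪x, m x⟫) :
    ENNReal.ofReal ((2 * Real.pi) ^ Fintype.card ι) ≤
      ∫⁻ q : EuclideanSpace ℝ ι × EuclideanSpace ℝ ι,
        ENNReal.ofReal (Real.exp (-(1 / 2) * (⟪q.1, m q.1⟫ + ⟪q.2, m q.2⟫))) *
          ENNReal.ofReal |((2⁻¹ : ℝ) • (m' q.1 + m' q.2)).det| := by
  classical
  have hgR (p : EuclideanSpace ℝ (ι ⊕ ι)) : ‖doubleMap m p‖ ≤ 2 * R := by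
    have hR0 : 0 ≤ R := (norm_nonneg _).trans (hR 0)
    refine (sq_le_sq₀ (norm_nonneg _) (by positivity)).1 ?_
    rw [norm_sq_sumEquivProd, doubleMap, ContinuousLinearEquiv.apply_symm_apply]
    nlinarith [pow_le_pow_left₀ (norm_nonneg _) (hR (sumEquivProd p).1) 2,
      pow_le_pow_left₀ (norm_nonneg _) (hR (sumEquivProd p).2) 2]
  have hgcoer (p : EuclideanSpace ℝ (ι ⊕ ι)) : δ * ‖p‖ - 2 * C ≤ ⟪p, doubleMap m p⟫ := by
    have htri : ‖p‖ ≤ ‖(sumEquivProd p).1‖ + ‖(sumEquivProd p).2‖ := by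
      refine (sq_le_sq₀ (norm_nonneg _) (by positivity)).1 ?_
      rw [norm_sq_sumEquivProd]
      nlinarith [mul_nonneg (norm_nonneg (sumEquivProd p).1) (norm_nonneg (sumEquivProd p).2)]
    rw [inner_doubleMap]
    linarith [hcoer (sumEquivProd p).1, hcoer (sumEquivProd p).2,
      mul_le_mul_of_nonneg_left htri hδ.le]
  have hmain := ofReal_sqrt_le_lintegral_deformedDet_I inner_doubleJ_self doubleJ_doubleJ
    (hasFDerivAt_doubleMap hm)
    (fun p => norm_doubleDiag_le (hB _) (hB _)) hgR hδ hgcoer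
  have hsqrt : √((2 * Real.pi) ^ Fintype.card (ι ⊕ ι)) = (2 * Real.pi) ^ Fintype.card ι := by
    rw [Fintype.card_sum, pow_add, Real.sqrt_mul_self (by positivity)]
  have hemb : MeasurableEmbedding (sumEquivProd (𝕜 := ℝ) (ι := ι) (κ := ι)) :=
    sumEquivProd.toHomeomorph.measurableEmbedding
  rw [hsqrt] at hmain
  refine hmain.trans_eq ?_
  rw [← measurePreserving_sumEquivProd.lintegral_comp_emb hemb]
  refine lintegral_congr fun p => ?_
  rw [inner_doubleMap, deformedDet_doubleJ_I, ← ofReal_norm, Complex.norm_real, Real.norm_eq_abs]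

end Doubling

section BourgainMilman

variable {V : Type*} [NormedAddCommGroup V] [InnerProductSpace ℝ V] [FiniteDimensional ℝ V]
  [MeasurableSpace V] {K : Set V}

lemma measurable_abs_det_midpoint {S : V → V →L[ℝ] V} (hS : Measurable S) :
    Measurable fun q : V × V => ENNReal.ofReal |((2⁻¹ : ℝ) • (S q.1 + S q.2)).det| := by
  have hmid : Measurable fun q : V × V => (2⁻¹ : ℝ) • (S q.1 + S q.2) :=
    Measurable.const_smul ((hS.comp measurable_fst).add (hS.comp measurable_snd)) (2⁻¹ : ℝ)
  have hdet : Measurable fun T : V →L[ℝ] V => |T.det| :=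
    ContinuousLinearMap.continuous_det.abs.measurable
  exact (hdet.comp hmid).ennreal_ofReal

variable [BorelSpace V]

lemma lintegral_comp_smul (f : V → ℝ≥0∞) {c : ℝ} (hc : 0 < c) :
    ∫⁻ x, f (c • x) = ENNReal.ofReal (c⁻¹ ^ finrank ℝ V) * ∫⁻ x, f x := by
  rw [← (measurableEmbedding_const_smul₀ hc.ne').lintegral_map f, Measure.map_addHaar_smul _ hc.ne',
    lintegral_smul_measure, abs_of_pos (by positivity), inv_pow, smul_eq_mul]

lemma lintegral_exp_neg_mul_supportFun (K : Set V) {c : ℝ} (hc : 0 < c) :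
    ∫⁻ x, ENNReal.ofReal (Real.exp (-(c * supportFun K x))) =
      ENNReal.ofReal (c⁻¹ ^ finrank ℝ V) * polarMass K := by
  simp only [← supportFun_smul K hc.le]
  exact lintegral_comp_smul (fun x => ENNReal.ofReal (Real.exp (-supportFun K x))) hc

lemma lintegral_mul_comp_add {E : V → ℝ≥0∞} {D : V × V → ℝ≥0∞} (hE : Measurable E)
    (hD : Measurable D) :
    ∫⁻ q : V × V, E (q.1 + q.2) * D q = ∫⁻ p, E p * ∫⁻ x, D (x, p - x) := by
  have hshift : Measurable fun q : V × V => E q.2 * D (q.1, q.2 - q.1) :=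
    (hE.comp measurable_snd).mul (hD.comp (by fun_prop))
  have hprod : Measurable fun q : V × V => E (q.1 + q.2) * D q :=
    (hE.comp (by fun_prop)).mul hD
  calc _ = ∫⁻ x, ∫⁻ y, E (x + y) * D (x, y) := by
        rw [Measure.volume_eq_prod, lintegral_prod _ hprod.aemeasurable]
    _ = ∫⁻ x, ∫⁻ p, E p * D (x, p - x) := lintegral_congr fun x => by
        rw [← lintegral_sub_right_eq_self (fun y => E (x + y) * D (x, y)) x]
        simp only [add_sub_cancel]
    _ = ∫⁻ p, ∫⁻ x, E p * D (x, p - x) :=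
        lintegral_lintegral_swap (f := fun x p => E p * D (x, p - x)) hshift.aemeasurable
    _ = _ := lintegral_congr fun p => lintegral_const_mul _ (hD.comp (by fun_prop))

lemma norm_centeredCovOperator_le {μ : Measure V} [IsProbabilityMeasure μ] (hμ : MemLp id 2 μ)
    {R : ℝ} (hR : ∀ᵐ y ∂μ, ‖y - μ[id]‖ ≤ R) : ‖centeredCovOperator μ‖ ≤ R ^ 2 := by
  refine ContinuousLinearMap.opNorm_le_of_re_inner_le (sq_nonneg R) fun v w hv hw => ?_
  have hbound : ∀ᵐ y ∂μ, ‖⟪v, y - μ[id]⟫ * ⟪w, y - μ[id]⟫‖ ≤ R ^ 2 := by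
    filter_upwards [hR] with y hy
    rw [norm_mul, sq]
    have hcoord {u : V} (hu : ‖u‖ = 1) : ‖⟪u, y - μ[id]⟫‖ ≤ R :=
      (norm_inner_le_norm u (y - μ[id])).trans (by rwa [hu, one_mul])
    exact mul_le_mul (hcoord hv) (hcoord hw) (norm_nonneg _) ((norm_nonneg _).trans hy)
  rw [inner_centeredCovOperator, covarianceBilin_apply hμ]
  simpa using (le_abs_self _).trans (norm_integral_le_of_norm_le_const hbound)

lemma norm_centeredCovOperator_gibbs_le (hK : IsCompact K) (hvol : volume K ≠ 0)
    (hconv : Convex ℝ K) (x : V) : ‖centeredCovOperator (gibbs K x)‖ ≤ diam K ^ 2 := by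
  have := isProbabilityMeasure_gibbs hK hvol x
  refine norm_centeredCovOperator_le (memLp_id_gibbs hK hvol x) ((ae_gibbs_mem hK x).mono ?_)
  intro y hy
  rw [← dist_eq_norm]
  exact dist_le_diam_of_mem hK.isBounded hy (gibbsMean_mem hK hvol hconv x)

lemma measurable_centeredCovOperator_gibbs (hK : IsCompact K) (hvol : volume K ≠ 0) :
    Measurable fun x => centeredCovOperator (gibbs K x) := by
  have hfderiv : (fun x => centeredCovOperator (gibbs K x)) = fderiv ℝ (gibbsMean K) :=
    funext fun x => (hasFDerivAt_gibbsMean hK hvol x).fderiv.symm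
  exact hfderiv ▸ measurable_fderiv ℝ _

lemma IsSymmConvexBody.exp_neg_half_inner_gibbsMean_le (hK : IsSymmConvexBody K) (x y : V) :
    Real.exp (-(1 / 2) * (⟪x, gibbsMean K x⟫ + ⟪y, gibbsMean K y⟫)) ≤
      4 ^ finrank ℝ V * Real.exp (-(1 / 4 * supportFun K (x + y))) := by
  have hx := hK.half_supportFun_sub_le_inner_gibbsMean x
  have hy := hK.half_supportFun_sub_le_inner_gibbsMean y
  have hadd := supportFun_add_le hK.isCompact hK.nonempty x y
  calc _ ≤ Real.exp (finrank ℝ V * Real.log 4 + -(1 / 4 * supportFun K (x + y))) := by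
        gcongr
        linarith
    _ = _ := by rw [Real.exp_add, Real.exp_nat_mul, Real.exp_log (by norm_num)]

lemma lintegral_exp_mul_det_gibbs_le (hK : IsSymmConvexBody K) :
    ∫⁻ q : V × V, ENNReal.ofReal (4 ^ finrank ℝ V *
        Real.exp (-(1 / 4 * supportFun K (q.1 + q.2)))) *
      ENNReal.ofReal |((2⁻¹ : ℝ) • (centeredCovOperator (gibbs K q.1) +
        centeredCovOperator (gibbs K q.2))).det| ≤
      16 ^ finrank ℝ V * (volume K * polarMass K) := by
  have hsupp := (continuous_supportFun hK.isCompact hK.nonempty).measurable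
  have hD := measurable_abs_det_midpoint
    (measurable_centeredCovOperator_gibbs hK.isCompact hK.volume_ne_zero)
  have h4 : ENNReal.ofReal (4 ^ finrank ℝ V) = 4 ^ finrank ℝ V := by
    rw [ENNReal.ofReal_pow (by norm_num), ENNReal.ofReal_ofNat]
  have hE : Measurable fun p =>
      ENNReal.ofReal (4 ^ finrank ℝ V * Real.exp (-(1 / 4 * supportFun K p))) := by fun_prop
  rw [lintegral_mul_comp_add hE hD]
  calc _ ≤ ∫⁻ p, ENNReal.ofReal (4 ^ finrank ℝ V * Real.exp (-(1 / 4 * supportFun K p))) *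
        volume K := by
        gcongr with p
        exact hK.lintegral_det_gibbs_midpoint_le p
    _ = 4 ^ finrank ℝ V * (4 ^ finrank ℝ V * polarMass K) * volume K := by
        simp only [ENNReal.ofReal_mul (pow_nonneg zero_le_four (finrank ℝ V)), h4]
        rw [lintegral_mul_const _ (by fun_prop), lintegral_const_mul _ (by fun_prop),
          lintegral_exp_neg_mul_supportFun K (by norm_num), one_div, inv_inv, h4]
    _ = _ := by rw [show (16 : ℝ≥0∞) = 4 * 4 by norm_num, mul_pow]; ring

/-- The Bourgain–Milman inequality up to an exponential factor. -/
theorem IsSymmConvexBody.one_le_mul_volume_mul_polarMass {ι : Type*} [Fintype ι]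
    {K : Set (EuclideanSpace ℝ ι)} (hK : IsSymmConvexBody K) :
    1 ≤ 16 ^ Fintype.card ι * (volume K * polarMass K) := by
  classical
  obtain ⟨R, hR⟩ := hK.isCompact.isBounded.exists_norm_le
  obtain ⟨δ, hδ, hcoer⟩ := exists_pos_mul_norm_le_supportFun hK.isCompact hK.zero_mem_interior
  have hmean (x : EuclideanSpace ℝ ι) := hR _
    (gibbsMean_mem hK.isCompact hK.volume_ne_zero hK.convex x)
  have hmain := two_pi_pow_le_lintegral_det_midpoint
    (hasFDerivAt_gibbsMean hK.isCompact hK.volume_ne_zero)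
    (norm_centeredCovOperator_gibbs_le hK.isCompact hK.volume_ne_zero hK.convex) hmean (half_pos hδ)
    fun x => (by linarith [hcoer x, hK.half_supportFun_sub_le_inner_gibbsMean x] :
      δ / 2 * ‖x‖ - finrank ℝ (EuclideanSpace ℝ ι) * Real.log 4 ≤ ⟪x, gibbsMean K x⟫)
  have hpi : 1 ≤ (2 * Real.pi) ^ Fintype.card ι :=
    one_le_pow₀ (by linarith [Real.pi_gt_three])
  calc 1 ≤ ENNReal.ofReal ((2 * Real.pi) ^ Fintype.card ι) := by simpa using hpi
    _ ≤ _ := hmain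
    _ ≤ _ := lintegral_mono fun q => by
        gcongr
        exact hK.exp_neg_half_inner_gibbsMean_le q.1 q.2
    _ ≤ _ := lintegral_exp_mul_det_gibbs_le hK
    _ = _ := by rw [finrank_euclideanSpace]

end BourgainMilman

section RogersShephard

lemma exists_linearMap_eq_of_sublinear {V : Type*} [AddCommGroup V] [Module ℝ V] {N : V → ℝ}
    (hsmul : ∀ c : ℝ, 0 < c → ∀ x, N (c • x) = c * N x) (hadd : ∀ x y, N (x + y) ≤ N x + N y)
    (x : V) : ∃ g : V →ₗ[ℝ] ℝ, g x = N x ∧ ∀ y, g y ≤ N y := by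
  have hzero : N 0 = 0 := by simpa [two_mul] using hsmul 2 two_pos 0
  have hline (c : ℝ) (hc : c • x = 0) : c • N x = 0 := by
    rcases smul_eq_zero.1 hc with rfl | rfl <;> simp [hzero]
  obtain ⟨g, hgx, hg⟩ := exists_extension_of_le_sublinear (.mkSpanSingleton' x (N x) hline) N hsmul
    hadd fun ⟨y, hy⟩ => by
      obtain ⟨t, rfl⟩ := Submodule.mem_span_singleton.1 hy
      rw [LinearPMap.mkSpanSingleton'_apply, smul_eq_mul]
      rcases lt_trichotomy t 0 with ht | rfl | ht
      · have := hadd (t • x) ((-t) • x)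
        rw [neg_smul, add_neg_cancel, hzero, ← neg_smul, hsmul _ (neg_pos.2 ht)] at this
        change t * N x ≤ N (t • x)
        linarith
      · simp [hzero]
      · exact (hsmul t ht x).ge
  refine ⟨g, (hgx ⟨x, Submodule.mem_span_singleton_self x⟩).trans ?_, hg⟩
  exact LinearPMap.mkSpanSingleton'_apply_self ..

variable {V : Type*} [NormedAddCommGroup V] [InnerProductSpace ℝ V] [FiniteDimensional ℝ V]
  {L M : Set V}

lemma exists_forall_supportFun_add_le (hL : IsCompact L) (hL0 : 0 ∈ interior L)
    (hM : IsCompact M) (hM0 : 0 ∈ M) (x : V) :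
    ∃ u, ∀ v, supportFun L u + supportFun M (x - u) ≤ supportFun L v + supportFun M (x - v) := by
  obtain ⟨δ, hδ, hcoer⟩ := exists_pos_mul_norm_le_supportFun hL hL0
  have hcont : Continuous fun u => supportFun L u + supportFun M (x - u) :=
    (continuous_supportFun hL ⟨0, interior_subset hL0⟩).add
      ((continuous_supportFun hM ⟨0, hM0⟩).comp (by fun_prop))
  refine hcont.exists_forall_le (tendsto_atTop_mono (fun u => ?_)
    (tendsto_norm_cocompact_atTop.const_mul_atTop hδ))
  exact (hcoer u).trans (le_add_of_nonneg_right (supportFun_nonneg hM hM0 _))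

/-- A linear functional dominated by the infimal convolution of the two support functions is the
pairing with a point of both sets. -/
lemma exists_supportFun_add_le_supportFun_inter (hL : IsCompact L) (hLconv : Convex ℝ L)
    (hL0 : 0 ∈ interior L) (hM : IsCompact M) (hMconv : Convex ℝ M) (hM0 : 0 ∈ M) (x : V) :
    ∃ u, supportFun L u + supportFun M (x - u) ≤ supportFun (L ∩ M) x := by
  have hLne : L.Nonempty := ⟨0, interior_subset hL0⟩
  choose u hu using exists_forall_supportFun_add_le hL hL0 hM hM0
  set N : V → ℝ := fun x => supportFun L (u x) + supportFun M (x - u x)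
  have hNL (x : V) : N x ≤ supportFun L x := by
    simpa only [sub_self, supportFun_zero, add_zero] using hu x x
  have hNM (x : V) : N x ≤ supportFun M x := by
    simpa only [sub_zero, supportFun_zero, zero_add] using hu x 0
  have hadd (x y : V) : N (x + y) ≤ N x + N y := by
    have h1 := hu (x + y) (u x + u y)
    have h2 := supportFun_add_le hL hLne (u x) (u y)
    have h3 := supportFun_add_le hM ⟨0, hM0⟩ (x - u x) (y - u y)
    rw [sub_add_sub_comm] at h3
    linarith
  have hsmul_le {c : ℝ} (hc : 0 < c) (x : V) : N (c • x) ≤ c * N x := by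
    have := hu (c • x) (c • u x)
    rwa [← smul_sub, supportFun_smul _ hc.le, supportFun_smul _ hc.le, ← mul_add] at this
  have hsmul (c : ℝ) (hc : 0 < c) (x : V) : N (c • x) = c * N x := by
    refine (hsmul_le hc x).antisymm ?_
    have := hsmul_le (inv_pos.2 hc) (c • x)
    rwa [inv_smul_smul₀ hc.ne', ← div_eq_inv_mul, le_div_iff₀' hc] at this
  obtain ⟨g, hgx, hg⟩ := exists_linearMap_eq_of_sublinear hsmul hadd x
  obtain ⟨z, hz⟩ : ∃ z : V, ∀ y, ⟪y, z⟫ = g y :=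
    ⟨(toDual ℝ V).symm g.toContinuousLinearMap, fun y => by rw [real_inner_comm]; simp⟩
  have hzL : z ∈ L := mem_of_forall_inner_le_supportFun hL.isClosed hLconv hLne
    fun y => (hz y).trans_le ((hg y).trans (hNL y))
  have hzM : z ∈ M := mem_of_forall_inner_le_supportFun hM.isClosed hMconv ⟨0, hM0⟩
    fun y => (hz y).trans_le ((hg y).trans (hNM y))
  refine ⟨u x, (hgx.symm.trans (hz x).symm).trans_le ?_⟩
  exact inner_le_supportFun (hL.inter hM) x ⟨hzL, hzM⟩

variable [MeasurableSpace V] [BorelSpace V]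

lemma polarMass_ne_top (hL : IsCompact L) (hL0 : 0 ∈ interior L) : polarMass L ≠ ∞ := by
  obtain ⟨δ, hδ, hcoer⟩ := exists_pos_mul_norm_le_supportFun hL hL0
  refine ne_top_of_le_ne_top (integrable_exp_neg_mul_norm (V := V) hδ).lintegral_lt_top.ne ?_
  exact lintegral_mono fun x => by gcongr; exact hcoer x

lemma polarMass_ne_zero (hL : IsCompact L) (hne : L.Nonempty) : polarMass L ≠ 0 := by
  have hcont := continuous_supportFun hL hne
  rw [polarMass, ← pos_iff_ne_zero, lintegral_pos_iff_support (by fun_prop),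
    Function.support_eq_univ fun x => (ENNReal.ofReal_pos.2 (Real.exp_pos _)).ne']
  exact NeZero.pos _

lemma ofReal_exp_mul_polarMass_le (hL : IsCompact L) (hLconv : Convex ℝ L)
    (hL0 : 0 ∈ interior L) (x : V) :
    ENNReal.ofReal (Real.exp (-supportFun (L ∩ -L) x)) * polarMass L ≤
      2 ^ finrank ℝ V * ∫⁻ w, ENNReal.ofReal (Real.exp (-supportFun L w)) *
        ENNReal.ofReal (Real.exp (-supportFun L (w - x))) := by
  have hLne : L.Nonempty := ⟨0, interior_subset hL0⟩
  have hL0' : 0 ∈ -L := by simpa using interior_subset hL0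
  have hcont := continuous_supportFun hL hLne
  obtain ⟨u, hu⟩ := exists_supportFun_add_le_supportFun_inter hL hLconv hL0 hL.neg hLconv.neg hL0' x
  rw [supportFun_neg_set, neg_sub] at hu
  set F : V → ℝ≥0∞ := fun w => ENNReal.ofReal (Real.exp (-supportFun L w)) *
    ENNReal.ofReal (Real.exp (-supportFun L (w - x))) with hF
  have hpoint (y : V) : ENNReal.ofReal (Real.exp (-supportFun (L ∩ -L) x)) *
      ENNReal.ofReal (Real.exp (-supportFun L y)) ≤ F ((2⁻¹ : ℝ) • y + u) := by
    simp only [hF, ← ENNReal.ofReal_mul (Real.exp_nonneg _), ← Real.exp_add]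
    refine ENNReal.ofReal_le_ofReal (Real.exp_le_exp.2 ?_)
    have h1 := supportFun_add_le hL hLne ((2⁻¹ : ℝ) • y) u
    have h2 := supportFun_add_le hL hLne ((2⁻¹ : ℝ) • y) (u - x)
    rw [supportFun_smul _ (by norm_num)] at h1 h2
    rw [add_sub_assoc]
    linarith
  have hscale : ∫⁻ y, F ((2⁻¹ : ℝ) • y + u) = 2 ^ finrank ℝ V * ∫⁻ w, F w := by
    rw [lintegral_comp_smul (fun w => F (w + u)) (by norm_num), lintegral_add_right_eq_self F u,
      inv_inv, ENNReal.ofReal_pow zero_le_two, ENNReal.ofReal_ofNat]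
  rw [← hscale, polarMass, ← lintegral_const_mul _ (by fun_prop)]
  exact lintegral_mono hpoint

/-- The Rogers–Shephard inequality for the polar body. -/
theorem polarMass_inter_neg_le (hL : IsCompact L) (hLconv : Convex ℝ L)
    (hL0 : 0 ∈ interior L) : polarMass (L ∩ -L) ≤ 2 ^ finrank ℝ V * polarMass L := by
  have hLne : L.Nonempty := ⟨0, interior_subset hL0⟩
  have hcont := continuous_supportFun hL hLne
  have hF : Measurable fun w => ENNReal.ofReal (Real.exp (-supportFun L w)) := by fun_prop
  refine (ENNReal.mul_le_mul_iff_left (polarMass_ne_zero hL hLne)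
    (polarMass_ne_top hL hL0)).1 ?_
  calc polarMass (L ∩ -L) * polarMass L
      = ∫⁻ x, ENNReal.ofReal (Real.exp (-supportFun (L ∩ -L) x)) * polarMass L :=
        (lintegral_mul_const' _ _ (polarMass_ne_top hL hL0)).symm
    _ ≤ ∫⁻ x, 2 ^ finrank ℝ V * ∫⁻ w, ENNReal.ofReal (Real.exp (-supportFun L w)) *
        ENNReal.ofReal (Real.exp (-supportFun L (w - x))) :=
        lintegral_mono (ofReal_exp_mul_polarMass_le hL hLconv hL0)
    _ = 2 ^ finrank ℝ V * ∫⁻ w, ∫⁻ x, ENNReal.ofReal (Real.exp (-supportFun L w)) *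
        ENNReal.ofReal (Real.exp (-supportFun L (w - x))) := by
        rw [lintegral_const_mul' _ _ (by finiteness), lintegral_lintegral_swap]
        fun_prop
    _ = 2 ^ finrank ℝ V * polarMass L * polarMass L := by
        have hshift (w : V) : ∫⁻ x, ENNReal.ofReal (Real.exp (-supportFun L (w - x))) =
            polarMass L :=
          lintegral_sub_left_eq_self (fun x => ENNReal.ofReal (Real.exp (-supportFun L x))) w
        simp only [lintegral_const_mul' _ _ ENNReal.ofReal_ne_top, hshift]
        rw [lintegral_mul_const _ hF, mul_assoc, ← polarMass]

end RogersShephard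

section PolarKernel

variable {V : Type*} [NormedAddCommGroup V] [InnerProductSpace ℝ V]

/-- The kernel `n! / (1 - ⟪x, y⟫) ^ (n + 1)`, with `n = dim V`, where `⟪x, y⟫ < 1`, and `∞`
elsewhere, written as a Laplace integral. -/
def polarKernel (x y : V) : ℝ≥0∞ :=
  ∫⁻ r in Ioi (0 : ℝ), ENNReal.ofReal (r ^ finrank ℝ V * Real.exp (-(r * (1 - ⟪x, y⟫))))

lemma polarKernel_comm (x y : V) : polarKernel x y = polarKernel y x := by
  simp only [polarKernel, real_inner_comm]

lemma lintegral_Ioi_exp_neg_sub (a b : ℝ) :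
    ∫⁻ r in Ioi a, ENNReal.ofReal (Real.exp (-(r - b))) =
      ENNReal.ofReal (Real.exp (-(a - b))) := by
  have hexp (r : ℝ) : Real.exp (-(r - b)) = Real.exp b * Real.exp (-r) := by
    rw [← Real.exp_add, neg_sub, sub_eq_add_neg]
  simp only [hexp]
  rw [← ofReal_integral_eq_lintegral_ofReal ((integrableOn_exp_neg_Ioi a).const_mul _)
    (.of_forall fun r => by positivity), integral_const_mul, integral_exp_neg_Ioi]

variable [FiniteDimensional ℝ V] [MeasurableSpace V] [BorelSpace V]

lemma measurable_polarKernel : Measurable fun q : V × V => polarKernel q.1 q.2 := by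
  have hcont : Continuous fun q : (V × V) × ℝ =>
    q.2 ^ finrank ℝ V * Real.exp (-(q.2 * (1 - ⟪q.1.1, q.1.2⟫))) := by fun_prop
  exact hcont.measurable.ennreal_ofReal.lintegral_prod_right'

lemma setLIntegral_pow_mul_exp {U : Set V} (hU : MeasurableSet U) (y : V) {r : ℝ} (hr : 0 < r) :
    ∫⁻ x in U, ENNReal.ofReal (r ^ finrank ℝ V * Real.exp (-(r * (1 - ⟪x, y⟫)))) =
      ∫⁻ p, U.indicator (fun _ => ENNReal.ofReal (Real.exp (-(r - ⟪p, y⟫)))) (r⁻¹ • p) := by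
  have hcancel (p : V) :
      U.indicator (fun _ => ENNReal.ofReal (Real.exp (-(r - ⟪p, y⟫)))) (r⁻¹ • p) =
        U.indicator (fun x => ENNReal.ofReal (Real.exp (-(r - ⟪r • x, y⟫)))) (r⁻¹ • p) := by
    simp only [indicator, smul_inv_smul₀ hr.ne']
  rw [lintegral_congr hcancel, lintegral_comp_smul (U.indicator _) (inv_pos.2 hr), inv_inv,
    lintegral_indicator hU, ← lintegral_const_mul' _ _ ENNReal.ofReal_ne_top]
  refine lintegral_congr fun x => ?_
  rw [← ENNReal.ofReal_mul (by positivity), real_inner_smul_left, mul_sub, mul_one]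

/-- The change of variables `p = r • x` turns the density `r ^ n` into Lebesgue measure. -/
lemma setLIntegral_polarKernel {U : Set V} (hU : MeasurableSet U) (y : V) :
    ∫⁻ x in U, polarKernel x y =
      ∫⁻ p, ∫⁻ r in {r | 0 < r ∧ r⁻¹ • p ∈ U}, ENNReal.ofReal (Real.exp (-(r - ⟪p, y⟫))) := by
  set F : V → ℝ → ℝ≥0∞ := fun p r =>
    U.indicator (fun _ => ENNReal.ofReal (Real.exp (-(r - ⟪p, y⟫)))) (r⁻¹ • p)
  have hslice (p : V) : MeasurableSet {r : ℝ | r⁻¹ • p ∈ U} :=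
    hU.preimage (measurable_inv.smul_const p)
  have hFmeas : Measurable F.uncurry := by
    have hU' : MeasurableSet {q : V × ℝ | q.2⁻¹ • q.1 ∈ U} :=
      hU.preimage (measurable_snd.inv.smul measurable_fst)
    have hcont : Continuous fun q : V × ℝ => Real.exp (-(q.2 - ⟪q.1, y⟫)) := by fun_prop
    exact hcont.measurable.ennreal_ofReal.indicator hU'
  have hcont : Continuous fun q : V × ℝ =>
    q.2 ^ finrank ℝ V * Real.exp (-(q.2 * (1 - ⟪q.1, y⟫))) := by fun_prop
  calc ∫⁻ x in U, polarKernel x y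
      = ∫⁻ r in Ioi (0 : ℝ), ∫⁻ x in U,
          ENNReal.ofReal (r ^ finrank ℝ V * Real.exp (-(r * (1 - ⟪x, y⟫)))) :=
        lintegral_lintegral_swap hcont.measurable.ennreal_ofReal.aemeasurable
    _ = ∫⁻ r in Ioi (0 : ℝ), ∫⁻ p, F p r :=
        setLIntegral_congr_fun measurableSet_Ioi fun r hr => setLIntegral_pow_mul_exp hU y hr
    _ = ∫⁻ p, ∫⁻ r in Ioi (0 : ℝ), F p r :=
        (lintegral_lintegral_swap hFmeas.aemeasurable).symm
    _ = _ := lintegral_congr fun p => (setLIntegral_indicator (hslice p) _).trans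
        (by rw [inter_comm]; rfl)

lemma setLIntegral_polarKernel_le_polarMass {U A : Set V} (hU : MeasurableSet U)
    (hA : A.Nonempty) {y : V} (hUA : ∀ x ∈ U, ∀ v ∈ A, ⟪x, v⟫ ≤ 1 - ⟪x, y⟫) :
    ∫⁻ x in U, polarKernel x y ≤ polarMass A := by
  rw [setLIntegral_polarKernel hU]
  refine lintegral_mono fun p => ?_
  calc ∫⁻ r in {r | 0 < r ∧ r⁻¹ • p ∈ U}, ENNReal.ofReal (Real.exp (-(r - ⟪p, y⟫)))
      ≤ ∫⁻ r in Ici (supportFun A p + ⟪p, y⟫), ENNReal.ofReal (Real.exp (-(r - ⟪p, y⟫))) := by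
        refine lintegral_mono_set fun r ⟨hr, hrU⟩ => ?_
        have hle := supportFun_le hA (hUA _ hrU)
        rw [supportFun_smul A (inv_nonneg.2 hr.le), real_inner_smul_left, inv_mul_le_iff₀ hr,
          mul_sub, mul_inv_cancel_left₀ hr.ne'] at hle
        exact mem_Ici.2 (by linarith)
    _ = ENNReal.ofReal (Real.exp (-supportFun A p)) := by
        rw [setLIntegral_congr Ioi_ae_eq_Ici.symm, lintegral_Ioi_exp_neg_sub,
          add_sub_cancel_right]

lemma lintegral_exp_inner_sub_supportFun_le {K P : Set V} (hP : MeasurableSet P)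
    (hnonneg : ∀ p, 0 ≤ supportFun K p) (hKP : ∀ p, supportFun K p ≤ 1 → p ∈ P) (x : V) :
    ∫⁻ p, ENNReal.ofReal (Real.exp (-(supportFun K p - ⟪p, x⟫))) ≤
      ∫⁻ y in P, polarKernel y x := by
  rw [setLIntegral_polarKernel hP]
  refine lintegral_mono fun p => ?_
  rw [← lintegral_Ioi_exp_neg_sub]
  refine lintegral_mono_set fun r hr => ?_
  have hr0 : 0 < r := (hnonneg p).trans_lt hr
  refine ⟨hr0, hKP _ ?_⟩
  rw [supportFun_smul K (inv_nonneg.2 hr0.le), inv_mul_le_iff₀ hr0, mul_one]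
  exact (mem_Ioi.1 hr).le

end PolarKernel

section Polarity

variable {d : ℕ} {K S : Set (Euc d)} {x y : Euc d}

lemma isClosed_polarSet (S : Set (Euc d)) : IsClosed (polarSet S) := by
  have hInter : polarSet S = ⋂ x ∈ S, {y | ⟪x, y⟫ ≤ 1} := by
    ext
    simp [polarSet]
  rw [hInter]
  exact isClosed_biInter fun x _ => isClosed_le (by fun_prop) continuous_const

lemma convex_polarSet (S : Set (Euc d)) : Convex ℝ (polarSet S) := by
  intro y hy z hz a b ha hb hab x hx
  rw [inner_add_right, real_inner_smul_right, real_inner_smul_right, ← hab]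
  exact add_le_add (mul_le_of_le_one_right ha (hy x hx)) (mul_le_of_le_one_right hb (hz x hx))

lemma mem_interior_polarSet (hS : IsCompact S) (hy : ∀ x ∈ S, ⟪x, y⟫ < 1) :
    y ∈ interior (polarSet S) := by
  have hcont : Continuous fun q : Euc d × Euc d => ⟪q.2, q.1⟫ := by fun_prop
  have hnear : ∀ᶠ z in 𝓝 y, ∀ x ∈ S, ⟪x, z⟫ < 1 :=
    hS.eventually_forall_of_forall_eventually fun x hx =>
      hcont.continuousAt.eventually_lt_const (hy x hx)
  rw [mem_interior_iff_mem_nhds]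
  filter_upwards [hnear] with z hz x hx using (hz x hx).le

lemma zero_mem_interior_polarSet (hS : IsCompact S) : 0 ∈ interior (polarSet S) :=
  mem_interior_polarSet hS fun x _ => by simp

lemma isCompact_polarSet (h0 : 0 ∈ interior S) : IsCompact (polarSet S) := by
  obtain ⟨r, hr, hball⟩ := nhds_basis_closedBall.mem_iff.1 (mem_interior_iff_mem_nhds.1 h0)
  refine (isCompact_closedBall 0 r⁻¹).of_isClosed_subset (isClosed_polarSet S) fun y hy => ?_
  rcases eq_or_ne y 0 with rfl | hy0
  · exact mem_closedBall_self (inv_nonneg.2 hr.le)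
  have hnorm : 0 < ‖y‖ := norm_pos_iff.2 hy0
  have hmem : (r / ‖y‖) • y ∈ S := hball <| by
    rw [mem_closedBall_zero_iff, norm_smul, Real.norm_of_nonneg (by positivity),
      div_mul_cancel₀ _ hnorm.ne']
  have hle := hy _ hmem
  rw [real_inner_smul_left, real_inner_self_eq_norm_mul_norm, ← mul_assoc,
    div_mul_cancel₀ _ hnorm.ne'] at hle
  rwa [mem_closedBall_zero_iff, ← one_div, le_div_iff₀' hr]

lemma subset_polarSet_polarSet (K : Set (Euc d)) : K ⊆ polarSet (polarSet K) :=
  fun x hx y hy => (real_inner_comm x y).trans_le (hy x hx)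

lemma polarSet_polarSet (hK : IsCompact K) (hconv : Convex ℝ K) (h0 : 0 ∈ K) :
    polarSet (polarSet K) = K := by
  refine Subset.antisymm (fun x hx => ?_) (subset_polarSet_polarSet K)
  refine mem_of_forall_inner_le_supportFun hK.isClosed hconv ⟨0, h0⟩ fun u =>
    le_of_forall_pos_le_add fun ε hε => ?_
  have hpos : 0 < supportFun K u + ε :=
    add_pos_of_nonneg_of_pos (by simpa using inner_le_supportFun hK u h0) hε
  have hmem : (supportFun K u + ε)⁻¹ • u ∈ polarSet K := fun k hk => by
    rw [real_inner_smul_right, inv_mul_le_iff₀ hpos, mul_one, real_inner_comm]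
    exact (inner_le_supportFun hK u hk).trans (le_add_of_nonneg_right hε.le)
  have hle := hx _ hmem
  rwa [real_inner_smul_left, inv_mul_le_iff₀ hpos, mul_one] at hle

lemma image_sub_mem_nhds_zero (hx : x ∈ interior K) : (fun k => k - x) '' K ∈ 𝓝 0 := by
  simpa using (Homeomorph.subRight x).isOpenMap.image_mem_nhds (mem_interior_iff_mem_nhds.1 hx)

lemma inner_le_gauge_sub_mul (hx : x ∈ interior K) (hy : y ∈ polarSet K) (v : Euc d) :
    ⟪v, y⟫ ≤ gauge ((fun k => k - x) '' K) v * (1 - ⟪x, y⟫) := by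
  have hgap : 0 ≤ 1 - ⟪x, y⟫ := sub_nonneg.2 (hy x (interior_subset hx))
  have habs : Absorbent ℝ ((fun k => k - x) '' K) :=
    absorbent_nhds_zero (image_sub_mem_nhds_zero hx)
  have hgt : ∀ a > gauge ((fun k => k - x) '' K) v, ⟪v, y⟫ ≤ a * (1 - ⟪x, y⟫) := fun a ha => by
    obtain ⟨b, hb, hba, _, ⟨k, hk, rfl⟩, rfl⟩ := exists_lt_of_gauge_lt habs ha
    simp only [real_inner_smul_left, inner_sub_left]
    calc b * (⟪k, y⟫ - ⟪x, y⟫) ≤ b * (1 - ⟪x, y⟫) := by gcongr; exact hy k hk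
      _ ≤ a * (1 - ⟪x, y⟫) := by gcongr
  have hcont : Continuous fun a : ℝ => a * (1 - ⟪x, y⟫) := by fun_prop
  exact ge_of_tendsto (hcont.continuousWithinAt (s := Ioi _))
    (eventually_mem_nhdsWithin.mono hgt)

lemma inner_lt_one_of_mem_interior (hx : x ∈ interior K) (hy : y ∈ polarSet K) : ⟪x, y⟫ < 1 := by
  refine (hy x (interior_subset hx)).lt_of_ne fun heq => ?_
  have hle := inner_le_gauge_sub_mul hx hy x
  rw [heq, sub_self, mul_zero] at hle
  exact hle.not_gt one_pos

lemma polarSet_subset_interior_polarSet {G : Set (Euc d)} (hG : IsCompact G)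
    (hGK : G ⊆ interior K) : polarSet K ⊆ interior (polarSet G) := fun _ hy =>
  mem_interior_polarSet hG fun _ hx => inner_lt_one_of_mem_interior (hGK hx) hy

lemma gauge_sub_le_of_forall_inner_le (hK : IsCompact K) (hconv : Convex ℝ K) (h0 : 0 ∈ K)
    {v : Euc d} {t : ℝ} (ht : 0 < t) (h : ∀ y ∈ polarSet K, ⟪v, y⟫ ≤ t * (1 - ⟪x, y⟫)) :
    gauge ((fun k => k - x) '' K) v ≤ t := by
  refine gauge_le_of_mem ht.le ((mem_smul_set_iff_inv_smul_mem₀ ht.ne' _ _).2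
    ⟨t⁻¹ • v + x, ?_, add_sub_cancel_right _ _⟩)
  rw [← polarSet_polarSet hK hconv h0]
  intro y hy
  rw [real_inner_comm, inner_add_left, real_inner_smul_left, ← le_sub_iff_add_le,
    inv_mul_le_iff₀ ht]
  exact h y hy

end Polarity

section MacbeathRegions

variable {d : ℕ} {K S : Set (Euc d)} {x y z v : Euc d} {t : ℝ}

lemma mem_macbeathA : v ∈ macbeathA K x ↔ x + v ∈ K ∧ x - v ∈ K := by
  constructor
  · rintro ⟨_, ⟨hk, k, hk', rfl⟩, rfl⟩
    refine ⟨by simpa using hk, ?_⟩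
    convert hk' using 1
    simp only [two_smul]
    abel
  · rintro ⟨hadd, hsub⟩
    exact ⟨x + v, ⟨hadd, x - v, hsub, by simp only [two_smul]; abel⟩, add_sub_cancel_left x v⟩

lemma mem_macbeathA_polarSet :
    v ∈ macbeathA (polarSet S) y ↔ ∀ x ∈ S, |⟪x, v⟫| ≤ 1 - ⟪x, y⟫ := by
  simp only [mem_macbeathA, polarSet, mem_ofPred_eq, ← forall₂_and, inner_add_right,
    inner_sub_right, abs_le]
  refine forall₂_congr fun x _ => ?_
  constructor <;> rintro ⟨h, h'⟩ <;> constructor <;> linarith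

lemma macbeathA_eq_inter : macbeathA K x = (-x +ᵥ K) ∩ -(-x +ᵥ K) := by
  ext v
  simp only [mem_macbeathA, mem_inter_iff, Set.mem_neg, mem_vadd_set_iff_neg_vadd_mem, neg_neg,
    vadd_eq_add, ← sub_eq_add_neg]

lemma isSymmConvexBody_macbeathA (hK : IsCompact K) (hconv : Convex ℝ K) (hx : x ∈ interior K) :
    IsSymmConvexBody (macbeathA K x) where
  isCompact := by
    rw [macbeathA_eq_inter]
    exact (hK.vadd _).inter (hK.vadd _).neg
  convex := by
    rw [macbeathA_eq_inter]
    exact (hconv.vadd _).inter (hconv.vadd _).neg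
  neg_mem v hv := by
    rw [mem_macbeathA, ← sub_eq_add_neg, sub_neg_eq_add]
    exact (mem_macbeathA.1 hv).symm
  interior_nonempty := by
    have hnhds : -x +ᵥ K ∈ 𝓝 0 := by
      simpa using (vadd_mem_nhds_vadd_iff (-x)).2 (mem_interior_iff_mem_nhds.1 hx)
    refine ⟨0, mem_interior_iff_mem_nhds.2 ?_⟩
    rw [macbeathA_eq_inter]
    exact inter_mem hnhds (neg_mem_nhds_zero _ hnhds)

/-- The Macbeath region of scale `t` centred at `x`. -/
def macbeathRegion (K : Set (Euc d)) (x : Euc d) (t : ℝ) : Set (Euc d) :=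
  x +ᵥ t • macbeathA K x

lemma mem_macbeathRegion_polarSet (ht : 0 < t) :
    z ∈ macbeathRegion (polarSet S) y t ↔ ∀ x ∈ S, |⟪x, z - y⟫| ≤ t * (1 - ⟪x, y⟫) := by
  rw [macbeathRegion, mem_vadd_set_iff_neg_vadd_mem, mem_smul_set_iff_inv_smul_mem₀ ht.ne',
    mem_macbeathA_polarSet]
  refine forall₂_congr fun x _ => ?_
  rw [real_inner_smul_right, abs_mul, abs_of_pos (inv_pos.2 ht), inv_mul_le_iff₀ ht, vadd_eq_add,
    neg_add_eq_sub]

lemma mem_macbeathRegion (hK : IsCompact K) (hconv : Convex ℝ K) (h0 : 0 ∈ K) (ht : 0 < t) :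
    z ∈ macbeathRegion K x t ↔ ∀ y ∈ polarSet K, |⟪z - x, y⟫| ≤ t * (1 - ⟪x, y⟫) := by
  conv_lhs => rw [← polarSet_polarSet hK hconv h0, mem_macbeathRegion_polarSet ht]
  simp only [real_inner_comm]

lemma abs_inner_sub_le_of_mem_macbeathRegion (ht : 0 ≤ t) (hz : z ∈ macbeathRegion K x t)
    (hy : y ∈ polarSet K) : |⟪z - x, y⟫| ≤ t * (1 - ⟪x, y⟫) := by
  obtain ⟨_, ⟨w, hw, rfl⟩, rfl⟩ := hz
  obtain ⟨hadd, hsub⟩ := mem_macbeathA.1 hw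
  have hadd := hy _ hadd
  have hsub := hy _ hsub
  rw [inner_add_left] at hadd
  rw [inner_sub_left] at hsub
  simp only [vadd_eq_add, add_sub_cancel_left, real_inner_smul_left, abs_mul, abs_of_nonneg ht]
  gcongr
  rw [abs_le]
  constructor <;> linarith

lemma volume_macbeathRegion (K : Set (Euc d)) (x : Euc d) (ht : 0 ≤ t) :
    volume (macbeathRegion K x t) = ENNReal.ofReal (t ^ d) * volume (macbeathA K x) := by
  rw [macbeathRegion, measure_vadd, Measure.addHaar_smul, finrank_euclideanSpace_fin,
    abs_of_nonneg (pow_nonneg ht d)]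

lemma isCompact_macbeathRegion (hK : IsCompact K) (x : Euc d) (t : ℝ) :
    IsCompact (macbeathRegion K x t) := by
  rw [macbeathRegion, macbeathA_eq_inter]
  exact (((hK.vadd _).inter (hK.vadd _).neg).smul t).vadd x

lemma macbeathRegion_mem_nhds (hK : IsCompact K) (hconv : Convex ℝ K) (hx : x ∈ interior K)
    (ht : 0 < t) : macbeathRegion K x t ∈ 𝓝 x := by
  have hA := mem_interior_iff_mem_nhds.1 (isSymmConvexBody_macbeathA hK hconv hx).zero_mem_interior
  have hvadd := (vadd_mem_nhds_vadd_iff x).2 ((set_smul_mem_nhds_zero_iff ht.ne').2 hA)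
  rwa [vadd_eq_add, add_zero] at hvadd

lemma self_mem_macbeathRegion (hx : x ∈ K) (t : ℝ) : x ∈ macbeathRegion K x t :=
  ⟨0, ⟨0, mem_macbeathA.2 ⟨by simpa using hx, by simpa using hx⟩, smul_zero t⟩, add_zero x⟩

lemma macbeathRegion_subset_interior (hconv : Convex ℝ K) (hx : x ∈ interior K) (ht : 0 ≤ t)
    (ht1 : t < 1) : macbeathRegion K x t ⊆ interior K := by
  rintro _ ⟨_, ⟨w, hw, rfl⟩, rfl⟩
  have hcombo : x +ᵥ t • w = (1 - t) • x + t • (x + w) := by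
    rw [vadd_eq_add]
    module
  simp only [hcombo]
  exact hconv.combo_interior_self_mem_interior hx (mem_macbeathA.1 hw).1 (sub_pos.2 ht1) ht
    (sub_add_cancel 1 t)

lemma macbeathA_subset_two_smul (hconv : Convex ℝ K) (ht : 0 ≤ t) (ht1 : t ≤ 1)
    (hz : z ∈ macbeathRegion K x t) : macbeathA K z ⊆ (2 : ℝ) • macbeathA K x := by
  obtain ⟨_, ⟨w, hw, rfl⟩, rfl⟩ := hz
  intro v hv
  obtain ⟨hadd, hsub⟩ := mem_macbeathA.1 hv
  obtain ⟨hw_add, hw_sub⟩ := mem_macbeathA.1 hw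
  have hrefl : x - t • w ∈ K := by
    have := hconv hw_add hw_sub (a := (1 - t) / 2) (b := (1 + t) / 2) (by linarith) (by linarith)
      (by ring)
    convert this using 1
    module
  have hhalf : ∀ {u}, u ∈ K → (2⁻¹ : ℝ) • u + (2⁻¹ : ℝ) • (x - t • w) ∈ K := fun hu =>
    hconv hu hrefl (by norm_num) (by norm_num) (by norm_num)
  refine (mem_smul_set_iff_inv_smul_mem₀ two_ne_zero _ _).2 (mem_macbeathA.2 ⟨?_, ?_⟩)
  · convert hhalf hadd using 1
    simp only [vadd_eq_add]
    module
  · convert hhalf hsub using 1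
    simp only [vadd_eq_add]
    module

lemma mem_macbeathRegion_of_not_disjoint (hK : IsCompact K) (hconv : Convex ℝ K) (h0 : 0 ∈ K)
    (ht : 0 < t) (ht1 : t ≤ 1 / 3)
    (h : ¬Disjoint (macbeathRegion K x t) (macbeathRegion K z t)) :
    z ∈ macbeathRegion K x (3 * t) := by
  obtain ⟨w, hwx, hwz⟩ := Set.not_disjoint_iff.1 h
  rw [mem_macbeathRegion hK hconv h0 (by positivity)] at hwx hwz ⊢
  intro y hy
  obtain ⟨hx₁, hx₂⟩ := abs_le.1 (hwx y hy)
  obtain ⟨hz₁, hz₂⟩ := abs_le.1 (hwz y hy)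
  rw [inner_sub_left] at hx₁ hx₂ hz₁ hz₂ ⊢
  have hle : 1 - ⟪z, y⟫ ≤ 2 * (1 - ⟪x, y⟫) := by nlinarith
  have := mul_le_mul_of_nonneg_left hle ht.le
  rw [abs_le]
  constructor <;> linarith

end MacbeathRegions

section LocalMass

variable {d : ℕ} {K G U R : Set (Euc d)} {x y y' z : Euc d} {s t α : ℝ}

lemma polarMass_macbeathA_le (hK : IsCompact K) (hconv : Convex ℝ K) (h0 : 0 ∈ K)
    (hz : z ∈ interior K) :
    polarMass (macbeathA K z) ≤ 2 ^ d * ∫⁻ y in polarSet K, polarKernel y z := by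
  have hnhds : -z +ᵥ K ∈ 𝓝 0 := by
    simpa using (vadd_mem_nhds_vadd_iff (-z)).2 (mem_interior_iff_mem_nhds.1 hz)
  have hnonneg (p : Euc d) : 0 ≤ supportFun K p := by simpa using inner_le_supportFun hK p h0
  have htranslate (p : Euc d) : supportFun K p - ⟪p, z⟫ ≤ supportFun (-z +ᵥ K) p := by
    rw [sub_le_iff_le_add]
    refine supportFun_le ⟨0, h0⟩ fun k hk => ?_
    have hmem : -z +ᵥ k ∈ -z +ᵥ K := vadd_mem_vadd_set hk
    have hle := inner_le_supportFun (hK.vadd (-z)) p hmem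
    rwa [vadd_eq_add, neg_add_eq_sub, inner_sub_right, sub_le_iff_le_add] at hle
  calc polarMass (macbeathA K z) ≤ 2 ^ d * polarMass (-z +ᵥ K) := by
        rw [macbeathA_eq_inter]
        simpa using polarMass_inter_neg_le (hK.vadd (-z)) (hconv.vadd (-z))
          (mem_interior_iff_mem_nhds.2 hnhds)
    _ ≤ 2 ^ d * ∫⁻ p, ENNReal.ofReal (Real.exp (-(supportFun K p - ⟪p, z⟫))) := by
        unfold polarMass
        gcongr with p
        exact htranslate p
    _ ≤ 2 ^ d * ∫⁻ y in polarSet K, polarKernel y z := by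
        gcongr 2 ^ d * ?_
        refine lintegral_exp_inner_sub_supportFun_le (isClosed_polarSet K).measurableSet hnonneg
          (fun p hp k hk => ?_) z
        rw [real_inner_comm]
        exact (inner_le_supportFun hK p hk).trans hp

lemma one_le_volume_macbeathA_mul_polarMass (hK : IsCompact K) (hconv : Convex ℝ K)
    (hx : x ∈ interior K) (ht : 0 ≤ t) (ht1 : t < 1) (hz : z ∈ macbeathRegion K x t) :
    1 ≤ 32 ^ d * (volume (macbeathA K x) * polarMass (macbeathA K z)) := by
  have hsymm := isSymmConvexBody_macbeathA hK hconv
    (macbeathRegion_subset_interior hconv hx ht ht1 hz)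
  have hvol : volume (macbeathA K z) ≤ 2 ^ d * volume (macbeathA K x) := by
    refine (measure_mono (macbeathA_subset_two_smul hconv ht ht1.le hz)).trans_eq ?_
    rw [Measure.addHaar_smul_of_nonneg _ zero_le_two, finrank_euclideanSpace_fin,
      ENNReal.ofReal_pow zero_le_two, ENNReal.ofReal_ofNat]
  calc 1 ≤ 16 ^ d * (volume (macbeathA K z) * polarMass (macbeathA K z)) := by
        simpa using hsymm.one_le_mul_volume_mul_polarMass
    _ ≤ 16 ^ d * (2 ^ d * volume (macbeathA K x) * polarMass (macbeathA K z)) := by gcongr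
    _ = (16 * 2) ^ d * (volume (macbeathA K x) * polarMass (macbeathA K z)) := by
        rw [mul_pow]
        ring
    _ = 32 ^ d * (volume (macbeathA K x) * polarMass (macbeathA K z)) := by norm_num

lemma pow_le_lintegral_macbeathRegion (hK : IsCompact K) (hconv : Convex ℝ K) (h0 : 0 ∈ K)
    (hx : x ∈ interior K) (ht : 0 ≤ t) (ht1 : t < 1) :
    ENNReal.ofReal (t ^ d) ≤
      64 ^ d * ∫⁻ z in macbeathRegion K x t, ∫⁻ y in polarSet K, polarKernel y z := by
  have hsymm := isSymmConvexBody_macbeathA hK hconv hx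
  set v := volume (macbeathA K x)
  have hpoint : ∀ z ∈ macbeathRegion K x t,
      1 ≤ v * 64 ^ d * ∫⁻ y in polarSet K, polarKernel y z := fun z hz => by
    have hz' := macbeathRegion_subset_interior hconv hx ht ht1 hz
    calc 1 ≤ 32 ^ d * (v * polarMass (macbeathA K z)) :=
          one_le_volume_macbeathA_mul_polarMass hK hconv hx ht ht1 hz
      _ ≤ 32 ^ d * (v * (2 ^ d * ∫⁻ y in polarSet K, polarKernel y z)) := by
          gcongr
          exact polarMass_macbeathA_le hK hconv h0 hz'
      _ = v * (32 * 2) ^ d * ∫⁻ y in polarSet K, polarKernel y z := by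
          rw [mul_pow]
          ring
      _ = v * 64 ^ d * ∫⁻ y in polarSet K, polarKernel y z := by norm_num
  refine (ENNReal.mul_le_mul_iff_right hsymm.volume_ne_zero hsymm.volume_ne_top).1 ?_
  calc v * ENNReal.ofReal (t ^ d) = ∫⁻ _ in macbeathRegion K x t, 1 := by
        rw [setLIntegral_one, volume_macbeathRegion K x ht, mul_comm]
    _ ≤ ∫⁻ z in macbeathRegion K x t, v * 64 ^ d * ∫⁻ y in polarSet K, polarKernel y z :=
        setLIntegral_mono' (isCompact_macbeathRegion hK x t).measurableSet hpoint
    _ = v * (64 ^ d * ∫⁻ z in macbeathRegion K x t, ∫⁻ y in polarSet K, polarKernel y z) := by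
        rw [lintegral_const_mul' _ _ (ENNReal.mul_ne_top hsymm.volume_ne_top (by finiteness)),
          mul_assoc]

lemma setLIntegral_le_of_measure_mul_le {α : Type*} [MeasurableSpace α] {μ : Measure α} {R : Set α}
    (hR : μ R ≠ ∞) {f : α → ℝ≥0∞} {B : ℝ≥0∞} (h : ∀ y ∈ R, μ R * f y ≤ B) :
    ∫⁻ y in R, f y ∂μ ≤ B := by
  rcases eq_or_ne (μ R) 0 with hzero | hzero
  · rw [setLIntegral_measure_zero _ _ hzero]
    exact zero_le
  calc ∫⁻ y in R, f y ∂μ ≤ ∫⁻ _ in R, B / μ R ∂μ :=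
        setLIntegral_mono measurable_const fun y hy =>
          (ENNReal.le_div_iff_mul_le (Or.inl hzero) (Or.inl hR)).2 (mul_comm (μ R) _ ▸ h y hy)
    _ = B := by rw [setLIntegral_const, ENNReal.div_mul_cancel hzero hR]

lemma abs_inner_sub_le_two_mul_of_mem_macbeathRegion (hα : 0 < α) (hα1 : α ≤ 1)
    (hy : y ∈ polarSet K) (hy' : y' ∈ polarSet K) (hx : |⟪x, y' - y⟫| ≤ α * (1 - ⟪x, y⟫))
    (hz : z ∈ macbeathRegion K x (α / 12)) : |⟪z, y' - y⟫| ≤ 2 * α * (1 - ⟪z, y⟫) := by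
  have hzy := abs_inner_sub_le_of_mem_macbeathRegion (by positivity) hz hy
  have hzy' := abs_inner_sub_le_of_mem_macbeathRegion (by positivity) hz hy'
  have hxy' : 1 - ⟪x, y'⟫ ≤ 1 - ⟪x, y⟫ + α * (1 - ⟪x, y⟫) := by
    have := (abs_le.1 hx).1
    rw [inner_sub_right] at this
    linarith
  have hzgap : 1 - ⟪x, y⟫ - α / 12 * (1 - ⟪x, y⟫) ≤ 1 - ⟪z, y⟫ := by
    have := (abs_le.1 hzy).2
    rw [inner_sub_left] at this
    linarith
  have hgap : 0 ≤ 1 - ⟪x, y⟫ := nonneg_of_mul_nonneg_right ((abs_nonneg _).trans hx) hα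
  set l := 1 - ⟪x, y⟫
  have hαl : α * l ≤ l := mul_le_of_le_one_left hgap hα1
  have hαl0 : 0 ≤ α * l := by positivity
  calc |⟪z, y' - y⟫| = |⟪x, y' - y⟫ + (⟪z - x, y'⟫ - ⟪z - x, y⟫)| := by
        rw [← inner_sub_right, inner_sub_left z, add_sub_cancel]
    _ ≤ |⟪x, y' - y⟫| + (|⟪z - x, y'⟫| + |⟪z - x, y⟫|) :=
        (abs_add_le _ _).trans (add_le_add_right (abs_sub _ _) _)
    _ ≤ α * l + (α / 12 * (l + α * l) + α / 12 * l) := by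
        gcongr
        exact hzy'.trans (by gcongr)
    _ ≤ 2 * α * (l - α / 12 * l) := by nlinarith
    _ ≤ 2 * α * (1 - ⟪z, y⟫) := by gcongr

lemma mem_macbeathRegion_polarSet_union (hs : 1 ≤ s) (hα : 0 < α) (hα1 : α ≤ 1)
    (hU : ∀ z ∈ U, ∃ x ∈ G, z ∈ macbeathRegion K x (α / 12)) (hy : y ∈ polarSet K)
    (hy' : y' ∈ polarSet K) (h : ∀ x ∈ G, |⟪x, y' - y⟫| ≤ s * α * (1 - ⟪x, y⟫)) :
    y' ∈ macbeathRegion (polarSet (U ∪ G)) y (2 * (s * α)) := by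
  have hs0 : 0 < s := one_pos.trans_le hs
  -- By convexity the bound on `G` may be rescaled to `s = 1`, where it passes from `x` to `z`.
  set p := y + s⁻¹ • (y' - y) with hp_def
  have hp : p ∈ polarSet K :=
    (convex_polarSet K).add_smul_sub_mem hy hy' ⟨by positivity, inv_le_one_of_one_le₀ hs⟩
  have hinner (w : Euc d) : |⟪w, y' - y⟫| = s * |⟪w, p - y⟫| := by
    rw [hp_def, add_sub_cancel_left, real_inner_smul_right, abs_mul, abs_of_pos (inv_pos.2 hs0),
      mul_inv_cancel_left₀ hs0.ne']
  rw [mem_macbeathRegion_polarSet (by positivity)]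
  rintro z (hz | hz)
  · obtain ⟨x, hx, hzx⟩ := hU z hz
    have hxp : |⟪x, p - y⟫| ≤ α * (1 - ⟪x, y⟫) := by
      have := h x hx
      rwa [hinner, mul_assoc, mul_le_mul_iff_right₀ hs0] at this
    have hzp := abs_inner_sub_le_two_mul_of_mem_macbeathRegion hα hα1 hy hp hxp hzx
    rw [hinner]
    linarith [mul_le_mul_of_nonneg_left hzp hs0.le]
  · have := (abs_nonneg _).trans (h z hz)
    linarith [h z hz]

end LocalMass

section HilbertGeometry

variable {d : ℕ} {K U : Set (Euc d)} {c x x' y y' : Euc d} {α : ℝ}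

lemma hilbertDist_comm (K : Set (Euc d)) (x y : Euc d) : hilbertDist K x y = hilbertDist K y x := by
  rw [hilbertDist, hilbertDist, mul_comm (1 - gauge _ _)]

lemma gauge_sub_lt_one (x : Euc d) (hx' : x' ∈ interior K) :
    gauge ((fun k => k - x) '' K) (x' - x) < 1 := by
  refine interior_subset_gauge_lt_one _ ?_
  have himage := (Homeomorph.subRight x).image_interior K
  exact himage ▸ mem_image_of_mem _ hx'

lemma mem_hilbertBall_of_mem_macbeathRegion (hK : IsCompact K) (hconv : Convex ℝ K) (h0 : 0 ∈ K)
    (hα : 0 < α) (hα1 : α ≤ 1) (hx : x ∈ interior K) (h : x' ∈ macbeathRegion K x (α / 4)) :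
    x' ∈ hilbertBall K x α := by
  have habs := fun y hy => abs_inner_sub_le_of_mem_macbeathRegion (y := y) (by positivity) h hy
  have hforward : gauge ((fun k => k - x) '' K) (x' - x) ≤ α / 4 :=
    gauge_sub_le_of_forall_inner_le hK hconv h0 (by positivity) fun y hy =>
      (le_abs_self _).trans (habs y hy)
  have hbackward : gauge ((fun k => k - x') '' K) (x - x') ≤ α / 3 :=
    gauge_sub_le_of_forall_inner_le hK hconv h0 (by positivity) fun y hy => by
      obtain ⟨hneg, hpos⟩ := abs_le.1 (habs y hy)
      have hgap : 0 < 1 - ⟪x, y⟫ := sub_pos.2 (inner_lt_one_of_mem_interior hx hy)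
      rw [inner_sub_left] at hneg hpos ⊢
      nlinarith
  have hexp : Real.exp (-(2 * α)) ≤ (1 - α / 4) * (1 - α / 3) := by
    rw [Real.exp_neg]
    refine (inv_anti₀ (by positivity) (Real.add_one_le_exp (2 * α))).trans ?_
    rw [inv_le_iff_one_le_mul₀ (by positivity)]
    nlinarith [mul_pos hα hα]
  have hprod : Real.exp (-(2 * α)) ≤ (1 - gauge ((fun k => k - x) '' K) (x' - x)) *
      (1 - gauge ((fun k => k - x') '' K) (x - x')) :=
    hexp.trans (mul_le_mul (by linarith) (by linarith) (by linarith) (by linarith))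
  have hlog := (Real.le_log_iff_exp_le ((Real.exp_pos _).trans_le hprod)).2 hprod
  refine ⟨macbeathRegion_subset_interior hconv hx (by positivity) (by linarith) h, ?_⟩
  rw [hilbertDist]
  linarith

lemma exp_neg_mul_le_of_hilbertDist_le (hx : x ∈ interior K) (hx' : x' ∈ interior K)
    (h : hilbertDist K x x' ≤ α) (hy : y ∈ polarSet K) :
    Real.exp (-(2 * α)) * (1 - ⟪x, y⟫) ≤ 1 - ⟪x', y⟫ := by
  have hgauge := inner_le_gauge_sub_mul hx hy (x' - x)
  have hg := gauge_sub_lt_one x hx'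
  have hg' := gauge_sub_lt_one x' hx
  rw [hilbertDist] at h
  set g := gauge ((fun k => k - x) '' K) (x' - x)
  set g' := gauge ((fun k => k - x') '' K) (x - x')
  have hpos : 0 < (1 - g) * (1 - g') := mul_pos (sub_pos.2 hg) (sub_pos.2 hg')
  have hexp : Real.exp (-(2 * α)) ≤ 1 - g := calc
    Real.exp (-(2 * α)) ≤ (1 - g) * (1 - g') := (Real.le_log_iff_exp_le hpos).1 (by linarith)
    _ ≤ 1 - g := mul_le_of_le_one_right (sub_pos.2 hg).le (sub_le_self _ (gauge_nonneg _))
  calc Real.exp (-(2 * α)) * (1 - ⟪x, y⟫) ≤ (1 - g) * (1 - ⟪x, y⟫) :=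
        mul_le_mul_of_nonneg_right hexp (sub_pos.2 (inner_lt_one_of_mem_interior hx hy)).le
    _ ≤ 1 - ⟪x', y⟫ := by
        rw [inner_sub_left] at hgauge
        linarith

lemma exp_neg_mul_le_of_mem_hilbertBall (hc : c ∈ interior K) (hx : x ∈ hilbertBall K c α)
    (hx' : x' ∈ hilbertBall K c α) (hy : y ∈ polarSet K) :
    Real.exp (-(4 * α)) * (1 - ⟪x, y⟫) ≤ 1 - ⟪x', y⟫ := calc
  Real.exp (-(4 * α)) * (1 - ⟪x, y⟫)
      = Real.exp (-(2 * α)) * (Real.exp (-(2 * α)) * (1 - ⟪x, y⟫)) := by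
    rw [← mul_assoc, ← Real.exp_add]
    ring_nf
  _ ≤ Real.exp (-(2 * α)) * (1 - ⟪c, y⟫) := by
    gcongr
    exact exp_neg_mul_le_of_hilbertDist_le hx.1 hc (hilbertDist_comm K c x ▸ hx.2) hy
  _ ≤ 1 - ⟪x', y⟫ := exp_neg_mul_le_of_hilbertDist_le hc hx'.1 hx'.2 hy

lemma exp_sub_one_le_mul_exp (a : ℝ) : Real.exp a - 1 ≤ a * Real.exp a := by
  have hle := mul_le_mul_of_nonneg_right (Real.add_one_le_exp (-a)) (Real.exp_pos a).le
  rw [← Real.exp_add, neg_add_cancel, Real.exp_zero] at hle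
  linarith

lemma exp_four_mul_sub_one_le (hα : 0 ≤ α) (hα1 : α ≤ 1) : Real.exp (4 * α) - 1 ≤ 324 * α := by
  have hexp : Real.exp (4 * α) ≤ 3 ^ 4 := calc
    Real.exp (4 * α) ≤ Real.exp (4 : ℕ) := Real.exp_le_exp.2 (by push_cast; linarith)
    _ = Real.exp 1 ^ 4 := by rw [← Real.exp_nat_mul, mul_one]
    _ ≤ 3 ^ 4 := pow_le_pow_left₀ (Real.exp_pos 1).le Real.exp_one_lt_three.le 4
  calc Real.exp (4 * α) - 1 ≤ 4 * α * Real.exp (4 * α) := exp_sub_one_le_mul_exp _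
    _ ≤ 4 * α * 3 ^ 4 := by gcongr
    _ = 324 * α := by ring

lemma abs_inner_sub_le_of_mem_hilbertBall (hα : 0 ≤ α) (hα1 : α ≤ 1) (hc : c ∈ interior K)
    (hx : x ∈ hilbertBall K c α) (hx' : x' ∈ hilbertBall K c α) (hy : y ∈ polarSet K) :
    |⟪x' - x, y⟫| ≤ 324 * α * (1 - ⟪x, y⟫) := by
  have hgap : 0 ≤ 1 - ⟪x, y⟫ := (sub_pos.2 (inner_lt_one_of_mem_interior hx.1 hy)).le
  have hlower := exp_neg_mul_le_of_mem_hilbertBall hc hx hx' hy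
  have hupper : 1 - ⟪x', y⟫ ≤ Real.exp (4 * α) * (1 - ⟪x, y⟫) := by
    have := exp_neg_mul_le_of_mem_hilbertBall hc hx' hx hy
    rwa [Real.exp_neg, inv_mul_le_iff₀ (Real.exp_pos _)] at this
  have hexp := mul_le_mul_of_nonneg_right (exp_four_mul_sub_one_le hα hα1) hgap
  have hexp_neg := mul_le_mul_of_nonneg_right (Real.add_one_le_exp (-(4 * α))) hgap
  rw [inner_sub_left, abs_le]
  constructor <;> linarith [mul_nonneg hα hgap]

lemma hilbertCov_le_card (X : Finset (Euc d)) (hX : ∀ x ∈ X, x ∈ interior K)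
    (hU : U ⊆ ⋃ x ∈ X, hilbertBall K x α) : hilbertCov K U α ≤ X.card := by
  refine Nat.sInf_le ⟨fun i => X.equivFin.symm i, fun i => hX _ (X.equivFin.symm i).2,
    fun u hu => ?_⟩
  obtain ⟨x, hx, hux⟩ := mem_iUnion₂.1 (hU hu)
  exact mem_iUnion.2 ⟨X.equivFin ⟨x, hx⟩, by simpa using hux⟩

end HilbertGeometry

section Covering

variable {d : ℕ} {G K U : Set (Euc d)} {c : Euc d} {α : ℝ}

lemma exists_hilbertCov_cover (hK : IsCompact K) (hconv : Convex ℝ K) (h0 : 0 ∈ K) (hα : 0 < α)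
    (hα1 : α ≤ 1) (hU : IsCompact U) (hUK : U ⊆ interior K) :
    ∃ x : Fin (hilbertCov K U α) → Euc d, (∀ i, x i ∈ interior K) ∧
      U ⊆ ⋃ i, hilbertBall K (x i) α := by
  obtain ⟨X, hXU, hX⟩ := hU.elim_nhds_subcover (fun x => hilbertBall K x α) fun x hx =>
    mem_of_superset (macbeathRegion_mem_nhds hK hconv (hUK hx) (t := α / 4) (by positivity))
      fun _ => mem_hilbertBall_of_mem_macbeathRegion hK hconv h0 hα hα1 (hUK hx)
  refine Nat.sInf_mem (s := {m : ℕ | ∃ x : Fin m → Euc d, (∀ i, x i ∈ interior K) ∧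
    U ⊆ ⋃ i, hilbertBall K (x i) α}) ⟨X.card, fun i => X.equivFin.symm i,
      fun i => hUK (hXU _ (X.equivFin.symm i).2), fun u hu => ?_⟩
  obtain ⟨x, hx, hux⟩ := mem_iUnion₂.1 (hX hu)
  exact mem_iUnion.2 ⟨X.equivFin ⟨x, hx⟩, by simpa using hux⟩

lemma inter_hilbertBall_subset_macbeathRegion (hα : 0 < α) (hα1 : α ≤ 1)
    (hU : ∀ z ∈ U, ∃ x ∈ G, z ∈ macbeathRegion K x (α / 12)) (hc : c ∈ interior (polarSet G))
    {y : Euc d} (hy : y ∈ polarSet K ∩ hilbertBall (polarSet G) c α) :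
    polarSet K ∩ hilbertBall (polarSet G) c α ⊆
      macbeathRegion (polarSet (U ∪ G)) y (2 * (324 * α)) := fun y' hy' =>
  mem_macbeathRegion_polarSet_union (by norm_num) hα hα1 hU hy.1 hy'.1 fun x hx => by
    rw [real_inner_comm, real_inner_comm y x]
    exact abs_inner_sub_le_of_mem_hilbertBall hα.le hα1 hc hy.2 hy'.2
      (subset_polarSet_polarSet G hx)

lemma lintegral_inter_hilbertBall_le (hG : IsCompact G) (h0 : 0 ∈ interior G)
    (hGK : G ⊆ interior K) (hα : 0 < α) (hα1 : α ≤ 1) (hU : IsCompact U) (hUK : U ⊆ interior K)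
    (hUG : ∀ z ∈ U, ∃ x ∈ G, z ∈ macbeathRegion K x (α / 12))
    (hc : c ∈ interior (polarSet G)) :
    ∫⁻ y in polarSet K ∩ hilbertBall (polarSet G) c α, ∫⁻ z in U, polarKernel z y ≤
      ENNReal.ofReal ((648 * 300 * α) ^ d) := by
  have hK0 : 0 ∈ interior K := hGK (interior_subset h0)
  refine setLIntegral_le_of_measure_mul_le (measure_ne_top_of_subset inter_subset_left
    (isCompact_polarSet hK0).measure_lt_top.ne) fun y hy => ?_
  have hsubset := inter_hilbertBall_subset_macbeathRegion hα hα1 hUG hc hy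
  have hint : y ∈ interior (polarSet (U ∪ G)) := mem_interior_polarSet (hU.union hG) fun x hx =>
    inner_lt_one_of_mem_interior (union_subset hUK hGK hx) hy.1
  have hsymm : IsSymmConvexBody (macbeathA (polarSet (U ∪ G)) y) :=
    isSymmConvexBody_macbeathA (isCompact_polarSet (interior_mono subset_union_right h0))
      (convex_polarSet _) hint
  set A := macbeathA (polarSet (U ∪ G)) y
  have hkernel : ∫⁻ z in U, polarKernel z y ≤ polarMass A :=
    setLIntegral_polarKernel_le_polarMass hU.measurableSet hsymm.nonempty fun x hx v hv =>
      (le_abs_self _).trans (mem_macbeathA_polarSet.1 hv x (Or.inl hx))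
  calc volume (polarSet K ∩ hilbertBall (polarSet G) c α) * ∫⁻ z in U, polarKernel z y
      ≤ ENNReal.ofReal ((2 * (324 * α)) ^ d) * volume A * polarMass A :=
        mul_le_mul' ((measure_mono hsubset).trans_eq
          (volume_macbeathRegion _ _ (by positivity))) hkernel
    _ ≤ ENNReal.ofReal ((2 * (324 * α)) ^ d) * 300 ^ d := by
        rw [mul_assoc]
        gcongr
        simpa using hsymm.volume_mul_polarMass_le
    _ = ENNReal.ofReal ((648 * 300 * α) ^ d) := by
        rw [← ENNReal.ofReal_ofNat 300, ← ENNReal.ofReal_pow (by norm_num),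
          ← ENNReal.ofReal_mul (by positivity), ← mul_pow]
        ring_nf

lemma lintegral_polarSet_le (hG : IsCompact G) (h0 : 0 ∈ interior G)
    (hGK : G ⊆ interior K) (hα : 0 < α) (hα1 : α ≤ 1) (hU : IsCompact U) (hUK : U ⊆ interior K)
    (hUG : ∀ z ∈ U, ∃ x ∈ G, z ∈ macbeathRegion K x (α / 12)) :
    ∫⁻ y in polarSet K, ∫⁻ z in U, polarKernel z y ≤
      hilbertCov (polarSet G) (polarSet K) α * ENNReal.ofReal ((648 * 300 * α) ^ d) := by
  obtain ⟨c, hc, hcover⟩ := exists_hilbertCov_cover (isCompact_polarSet h0) (convex_polarSet G)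
    (interior_subset (zero_mem_interior_polarSet hG)) hα hα1
    (isCompact_polarSet (hGK (interior_subset h0))) (polarSet_subset_interior_polarSet hG hGK)
  calc ∫⁻ y in polarSet K, ∫⁻ z in U, polarKernel z y
      ≤ ∫⁻ y in ⋃ i, polarSet K ∩ hilbertBall (polarSet G) (c i) α,
          ∫⁻ z in U, polarKernel z y :=
        lintegral_mono_set (by rw [← inter_iUnion]; exact subset_inter Subset.rfl hcover)
    _ ≤ ∑ i, ∫⁻ y in polarSet K ∩ hilbertBall (polarSet G) (c i) α,
          ∫⁻ z in U, polarKernel z y := by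
        simpa only [tsum_fintype] using lintegral_iUnion_le (μ := volume)
          (fun i => polarSet K ∩ hilbertBall (polarSet G) (c i) α)
          fun y => ∫⁻ z in U, polarKernel z y
    _ ≤ ∑ _ : Fin (hilbertCov (polarSet G) (polarSet K) α),
          ENNReal.ofReal ((648 * 300 * α) ^ d) := by
        gcongr with i
        exact lintegral_inter_hilbertBall_le hG h0 hGK hα hα1 hU hUK hUG (hc i)
    _ = hilbertCov (polarSet G) (polarSet K) α * ENNReal.ofReal ((648 * 300 * α) ^ d) := by
        simp only [Finset.sum_const, Finset.card_univ, Fintype.card_fin, nsmul_eq_mul]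

lemma card_mul_le_of_pairwiseDisjoint (hG : IsCompact G) (hK : IsCompact K) (hconv : Convex ℝ K)
    (h0 : 0 ∈ interior G) (hGK : G ⊆ interior K) (hα : 0 < α) (hα1 : α ≤ 1)
    {X : Finset (Euc d)} (hX : ↑X ⊆ G)
    (hdisj : (X : Set (Euc d)).PairwiseDisjoint fun x => macbeathRegion K x (α / 12)) :
    X.card * ENNReal.ofReal ((α / 12) ^ d) ≤ 64 ^ d * (hilbertCov (polarSet G) (polarSet K) α *
      ENNReal.ofReal ((648 * 300 * α) ^ d)) := by
  have hK0 : 0 ∈ K := interior_subset (hGK (interior_subset h0))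
  have hcompact (x : Euc d) := isCompact_macbeathRegion hK x (α / 12)
  set U : Set (Euc d) := ⋃ x ∈ X, macbeathRegion K x (α / 12) with hU
  have hUG : ∀ z ∈ U, ∃ x ∈ G, z ∈ macbeathRegion K x (α / 12) := fun z hz => by
    obtain ⟨x, hx, hzx⟩ := mem_iUnion₂.1 hz
    exact ⟨x, hX hx, hzx⟩
  have hUK : U ⊆ interior K := iUnion₂_subset fun x hx =>
    macbeathRegion_subset_interior hconv (hGK (hX hx)) (by positivity) (by linarith)
  calc X.card * ENNReal.ofReal ((α / 12) ^ d) = ∑ x ∈ X, ENNReal.ofReal ((α / 12) ^ d) := by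
        rw [Finset.sum_const, nsmul_eq_mul]
    _ ≤ ∑ x ∈ X, 64 ^ d *
          ∫⁻ z in macbeathRegion K x (α / 12), ∫⁻ y in polarSet K, polarKernel y z :=
        Finset.sum_le_sum fun x hx => pow_le_lintegral_macbeathRegion hK hconv hK0 (hGK (hX hx))
          (by positivity) (by linarith)
    _ = 64 ^ d * ∫⁻ z in U, ∫⁻ y in polarSet K, polarKernel z y := by
        simp only [polarKernel_comm]
        rw [hU, lintegral_biUnion_finset hdisj fun x _ => (hcompact x).measurableSet,
          Finset.mul_sum]
    _ = 64 ^ d * ∫⁻ y in polarSet K, ∫⁻ z in U, polarKernel z y := by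
        rw [lintegral_lintegral_swap measurable_polarKernel.aemeasurable]
    _ ≤ 64 ^ d * (hilbertCov (polarSet G) (polarSet K) α *
          ENNReal.ofReal ((648 * 300 * α) ^ d)) := by
        gcongr
        exact lintegral_polarSet_le hG h0 hGK hα hα1 (X.isCompact_biUnion fun x _ => hcompact x)
          hUK hUG

/-- The base of the exponential duality factor: packing scale `α / 12`, dual radius `648 * α`,
Santaló constant `300`, local mass constant `64`. -/
def dualityConst : ℝ := 12 * 648 * 300 * 64

lemma card_le_of_pairwiseDisjoint (hG : IsCompact G) (hK : IsCompact K) (hconv : Convex ℝ K)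
    (h0 : 0 ∈ interior G) (hGK : G ⊆ interior K) (hα : 0 < α) (hα1 : α ≤ 1)
    {X : Finset (Euc d)} (hX : ↑X ⊆ G)
    (hdisj : (X : Set (Euc d)).PairwiseDisjoint fun x => macbeathRegion K x (α / 12)) :
    (X.card : ℝ) ≤ dualityConst ^ d * hilbertCov (polarSet G) (polarSet K) α := by
  have hreal := ENNReal.toReal_mono (by finiteness)
    (card_mul_le_of_pairwiseDisjoint hG hK hconv h0 hGK hα hα1 hX hdisj)
  simp only [ENNReal.toReal_mul, ENNReal.toReal_natCast, ENNReal.toReal_pow,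
    ENNReal.toReal_ofNat] at hreal
  rw [ENNReal.toReal_ofReal (by positivity), ENNReal.toReal_ofReal (by positivity)] at hreal
  have hscale : dualityConst ^ d * (α / 12) ^ d = 64 ^ d * (648 * 300 * α) ^ d := by
    rw [dualityConst, ← mul_pow, ← mul_pow]
    ring
  refine le_of_mul_le_mul_right ?_ (show 0 < (α / 12) ^ d by positivity)
  calc X.card * (α / 12) ^ d
      ≤ 64 ^ d * (hilbertCov (polarSet G) (polarSet K) α * (648 * 300 * α) ^ d) := hreal
    _ = dualityConst ^ d * hilbertCov (polarSet G) (polarSet K) α * (α / 12) ^ d := by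
        rw [mul_right_comm (dualityConst ^ d), hscale]
        ring

lemma hilbertCov_le_mul_hilbertCov_polarSet (hG : IsCompact G) (hK : IsCompact K)
    (hconv : Convex ℝ K) (h0 : 0 ∈ interior G) (hGK : G ⊆ interior K) (hα : 0 < α)
    (hα1 : α ≤ 1) :
    (hilbertCov K G α : ℝ) ≤ dualityConst ^ d * hilbertCov (polarSet G) (polarSet K) α := by
  have hK0 : 0 ∈ K := interior_subset (hGK (interior_subset h0))
  obtain ⟨u, huG, hdisj, hmax⟩ := Vitali.exists_disjoint_subfamily_covering_enlargement
    (fun x => macbeathRegion K x (α / 12)) G (fun _ => 0) 2 one_lt_two (fun _ _ => le_rfl) 0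
    (fun _ _ => le_rfl) fun x hx => ⟨x, self_mem_macbeathRegion (interior_subset (hGK hx)) _⟩
  have hcard : ∀ X : Finset (Euc d), ↑X ⊆ u →
      (X.card : ℝ) ≤ dualityConst ^ d * hilbertCov (polarSet G) (polarSet K) α := fun X hX =>
    card_le_of_pairwiseDisjoint hG hK hconv h0 hGK hα hα1 (hX.trans huG) (hdisj.subset hX)
  have hfin : u.Finite := by
    by_contra hinf
    obtain ⟨n, hn⟩ := exists_nat_gt (dualityConst ^ d * hilbertCov (polarSet G) (polarSet K) α)
    obtain ⟨X, hX, rfl⟩ := Set.Infinite.exists_subset_card_eq hinf n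
    exact (hcard X hX).not_gt hn
  refine le_trans (Nat.cast_le.2 (hilbertCov_le_card hfin.toFinset
    (fun x hx => hGK (huG (hfin.mem_toFinset.1 hx))) fun z hz => ?_))
    (hcard hfin.toFinset hfin.coe_toFinset.subset)
  obtain ⟨x, hx, hmeet, -⟩ := hmax z hz
  refine mem_iUnion₂.2 ⟨x, hfin.mem_toFinset.2 hx, ?_⟩
  have hnear := mem_macbeathRegion_of_not_disjoint hK hconv hK0 (by positivity) (by linarith)
    (not_disjoint_iff_nonempty_inter.2 (inter_comm _ _ ▸ hmeet))
  refine mem_hilbertBall_of_mem_macbeathRegion hK hconv hK0 hα hα1 (hGK (huG hx)) ?_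
  rwa [show α / 4 = 3 * (α / 12) by ring]

end Covering

/-- Duality for volumetric Hilbert-ball coverings. -/
theorem hilbert_cover_duality :
    ∃ c : ℝ, 1 ≤ c ∧ ∀ d : ℕ, 2 ≤ d →
      ∀ G K : Set (Euc d), IsConvexBody G → IsConvexBody K →
        (0 : Euc d) ∈ interior G → G ⊆ interior K →
        ∀ α : ℝ, 0 < α → α ≤ 1 →
          (c ^ d)⁻¹ * (hilbertCov (polarSet G) (polarSet K) α : ℝ) ≤
              (hilbertCov K G α : ℝ) ∧
          (hilbertCov K G α : ℝ) ≤
              c ^ d * (hilbertCov (polarSet G) (polarSet K) α : ℝ) := by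
  refine ⟨dualityConst, by norm_num [dualityConst], fun d _ G K hG hK h0 hGK α hα hα1 => ?_⟩
  have hK0 : 0 ∈ interior K := hGK (interior_subset h0)
  have hdual := hilbertCov_le_mul_hilbertCov_polarSet (isCompact_polarSet hK0)
    (isCompact_polarSet h0) (convex_polarSet G) (zero_mem_interior_polarSet hK.1)
    (polarSet_subset_interior_polarSet hG.1 hGK) hα hα1
  rw [polarSet_polarSet hG.1 hG.2.1 (interior_subset h0),
    polarSet_polarSet hK.1 hK.2.1 (interior_subset hK0)] at hdual
  have hpos : 0 < dualityConst ^ d := pow_pos (by norm_num [dualityConst]) d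
  exact ⟨(inv_mul_le_iff₀ hpos).2 hdual,
    hilbertCov_le_mul_hilbertCov_polarSet hG.1 hK.1 hK.2.1 h0 hGK hα hα1⟩
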